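/- arXiv:1911.01210 — 10 statements merged into one kernel-verified Lean document; each statement's English description precedes it below -/
import Mathlib

section
/- The subgroup Λ of SL₂(ℤ[√5]) generated by the four matrices A, A′, B, B′ has finite index in SL₂(ℤ[√5]). (This is the concrete form of the arithmeticity theorem: these four matrices generate the monodromy group of the Wiman–Edge pencil, which is therefore an arithmetic group.) -/
/-!
The proof is an explicit coset enumeration. Write `U r` for the upper unipotent matrix with entry
`r ∈ ℤ[√5]` and `W` for the Weyl element `[[0, 1], [-1, 0]]`.

The group `SL₂(ℤ[√5])` is generated by `W` and all `U r` (`Monodromy.mem_E`). The ring `ℤ[√5]` is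
not Euclidean, but division with remainder for the norm fails only when the quotient is congruent
to `(1 + √5) / 2` (`Monodromy.exists_norm_lt`), and then both entries lie in the prime ideal
`(2, 1 + √5)`; this is impossible for the bottom row of a matrix of determinant one
(`Monodromy.exists_norm_lt_row`). So the Euclidean algorithm on bottom rows succeeds.

Let `Λ` be the group in question. Four matrices `cusp j` are chosen so that the cosets
`± Λ * cusp j * U r` exhaust the group. For each `j` the group `Λ` contains the conjugates by
`cusp j` of `U √5` and of `U w`, with `w = 10, 10, 2, 2` the width of the cusp
(`Monodromy.cusp_sqrt_mem`, `Monodromy.cusp_width_mem`), so the coset depends only on `j`, on the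
integer part of `r` modulo `w`, and on the sign: there are at most `2 * (10 + 10 + 2 + 2) = 48` such
cosets. Their union is visibly stable under right multiplication by every `U s`, and it is stable
under `W` because for each residue `m` modulo `w` one has
`cusp j * U m * W = ± g * cusp k * U l` for an explicit `g ∈ Λ` (`Monodromy.exists_edge`). In both
places the elements of `Λ` are explicit words in the generators, and the identities are checked by
multiplying out. Hence the union is everything (`Monodromy.reach`) and the index is finite.
-/


/-- `R5` is the ring `ℤ[√5]`. -/
abbrev R5 := Zsqrtd 5

/-- `SL₂(ℤ[√5])`. -/
abbrev SL2R5 := Matrix.SpecialLinearGroup (Fin 2) R5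

/-- The matrix `A = [[1, √5],[0, 1]]`. -/
def A : SL2R5 :=
  ⟨!![1, Zsqrtd.sqrtd; 0, 1], by rw [Matrix.det_fin_two_of]; decide⟩

/-- The matrix `A′ = [[1, 0],[−√5, 1]]`. -/
def A' : SL2R5 :=
  ⟨!![1, 0; -Zsqrtd.sqrtd, 1], by rw [Matrix.det_fin_two_of]; decide⟩

/-- The matrix `B = [[3+√5, 2+√5],[−2−√5, −1−√5]]`. -/
def B : SL2R5 :=
  ⟨!![3 + Zsqrtd.sqrtd, 2 + Zsqrtd.sqrtd; -(2 + Zsqrtd.sqrtd), -(1 + Zsqrtd.sqrtd)], by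
    rw [Matrix.det_fin_two_of]; decide⟩

/-- The matrix `B′ = [[−1+√5, −2+√5],[2−√5, 3−√5]]`. -/
def B' : SL2R5 :=
  ⟨!![-1 + Zsqrtd.sqrtd, -2 + Zsqrtd.sqrtd; 2 - Zsqrtd.sqrtd, 3 - Zsqrtd.sqrtd], by
    rw [Matrix.det_fin_two_of]; decide⟩

namespace Monodromy

open Matrix

/-! ### Unipotent matrices and the group `Λ` -/

/-- The upper unipotent matrix `[[1, r], [0, 1]]`. -/
def U (r : R5) : SL2R5 := ⟨!![1, r; 0, 1], by simp [det_fin_two_of]⟩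

/-- The lower unipotent matrix `[[1, 0], [r, 1]]`. -/
def V (r : R5) : SL2R5 := ⟨!![1, 0; r, 1], by simp [det_fin_two_of]⟩

/-- The unipotent matrix `[[1 + r, r], [-r, 1 - r]]`, which fixes the column vector `(1, -1)`. -/
def N (r : R5) : SL2R5 := ⟨!![1 + r, r; -r, 1 - r], by rw [det_fin_two_of]; ring⟩

/-- The Weyl element `[[0, 1], [-1, 0]]`. -/
def W : SL2R5 := ⟨!![0, 1; -1, 0], by simp [det_fin_two_of]⟩

/-- The matrix `-1`, written as the square of the Weyl element. -/
def Z : SL2R5 := W * W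

/-- The subgroup generated by the four monodromy matrices. -/
def Λ : Subgroup SL2R5 := Subgroup.closure {A, A', B, B'}

lemma U_add (x y : R5) : U (x + y) = U x * U y := by
  apply Subtype.ext
  change !![1, x + y; 0, 1] = !![1, x; 0, 1] * !![1, y; 0, 1]
  simp [add_comm]

lemma V_add (x y : R5) : V (x + y) = V x * V y := by
  apply Subtype.ext
  change !![1, 0; x + y, 1] = !![1, 0; x, 1] * !![1, 0; y, 1]
  simp

lemma N_add (x y : R5) : N (x + y) = N x * N y := by
  apply Subtype.ext
  change !![1 + (x + y), x + y; -(x + y), 1 - (x + y)] =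
    !![1 + x, x; -x, 1 - x] * !![1 + y, y; -y, 1 - y]
  rw [mul_fin_two]
  ring_nf

lemma map_zsmul_eq_zpow {f : R5 → SL2R5} (hf : ∀ x y, f (x + y) = f x * f y) (x : R5) (n : ℤ) :
    f (n • x) = f x ^ n :=
  map_zpow (MonoidHom.mk' (fun t : Multiplicative R5 => f t.toAdd) fun _ _ => hf _ _)
    (Multiplicative.ofAdd x) n

lemma Z_comm (g : SL2R5) : Z * g = g * Z := by
  apply Subtype.ext
  have h : Z.1 = -1 := by decide +kernel
  change Z.1 * g.1 = g.1 * Z.1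
  rw [h, neg_one_mul, mul_neg_one]

lemma Z_mul_Z : Z * Z = 1 := by decide +kernel

/-- The element `A ^ k` of `Λ`. -/
def a (k : ℤ) : SL2R5 := U ⟨0, k⟩

/-- The element `A' ^ k` of `Λ`. -/
def c (k : ℤ) : SL2R5 := V ⟨0, -k⟩

/-- The element `B ^ m * B' ^ n` of `Λ`. -/
def b (m n : ℤ) : SL2R5 := N ⟨2 * (m - n), m + n⟩

lemma a_mem (k : ℤ) : a k ∈ Λ := by
  have h : a k = A ^ k := by
    have hA : A = U ⟨0, 1⟩ := by decide +kernel
    rw [hA, ← map_zsmul_eq_zpow U_add, a]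
    congr 1
    ext <;> simp
  rw [h]
  exact zpow_mem (Subgroup.subset_closure (by simp)) k

lemma c_mem (k : ℤ) : c k ∈ Λ := by
  have h : c k = A' ^ k := by
    have hA : A' = V ⟨0, -1⟩ := by decide +kernel
    rw [hA, ← map_zsmul_eq_zpow V_add, c]
    congr 1
    ext <;> simp
  rw [h]
  exact zpow_mem (Subgroup.subset_closure (by simp)) k

lemma b_mem (m n : ℤ) : b m n ∈ Λ := by
  have h : b m n = B ^ m * B' ^ n := by
    have hB : B = N ⟨2, 1⟩ := by decide +kernel
    have hB' : B' = N ⟨-2, 1⟩ := by decide +kernel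
    rw [hB, hB', ← map_zsmul_eq_zpow N_add, ← map_zsmul_eq_zpow N_add, ← N_add, b]
    congr 1
    ext <;> simp
    ring
  rw [h]
  exact mul_mem (zpow_mem (Subgroup.subset_closure (by simp)) m)
    (zpow_mem (Subgroup.subset_closure (by simp)) n)

/-! ### The coset graph -/

/-- Representatives of the four cusps of the group generated by `Λ` and `-1`. -/
def cusp : Fin 4 → SL2R5 := ![1, V 1, V (-1), V 1 * U 2 * W]

/-- The width of each cusp in the direction of the integers. -/
def width : Fin 4 → ℤ := ![10, 10, 2, 2]

/-- The stabilizer of each cusp in `Λ` contains the translation by `√5`, with an explicit word in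
the generators as witness. -/
lemma cusp_sqrt_mem (j : Fin 4) : cusp j * U ⟨0, 1⟩ * (cusp j)⁻¹ ∈ Λ := by
  have h : ∀ j, cusp j * U ⟨0, 1⟩ = ![a 1,
      c (-1) * b 1 0 * c 1 * b 0 1 * c (-1),
      c (-1) * a (-1) * b 0 1 * c (-1) * b 1 0 * a (-1) * c (-1),
      c 1 * b 0 (-1) * a 1 * b 1 0 * c 1 * b 0 1 * a 1 * b (-1) 0 * c 1] j * cusp j := by
    decide +kernel
  rw [h, mul_inv_cancel_right]
  fin_cases j <;> simp [Subgroup.mul_mem_cancel_right, a_mem, b_mem, c_mem]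

/-- The stabilizer of each cusp in `Λ` contains the translation by its width, with an explicit word
in the generators as witness. -/
lemma cusp_width_mem (j : Fin 4) : cusp j * U ⟨width j, 0⟩ * (cusp j)⁻¹ ∈ Λ := by
  have h : ∀ j, cusp j * U ⟨width j, 0⟩ = ![
      c 1 * b 0 (-1) * c (-1) * a (-1) * b 0 (-1) * c 1 * b 0 (-1) * a 1 * b 2 0 * a 4,
      c 1 * b 0 2 * c 1 * b 0 1 * a 1 * c 1 * b 0 (-1) * a 1 * b (-1) 0 * c 1 * b (-2) 0 * a (-1),
      c 1 * a 1 * b (-1) 0 * c 1 * b 0 (-1) * a 1 * c 1 * b 1 0,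
      c (-1) * b 1 0 * c 1 * b 0 1 * c (-1) * a (-1) * b 0 (-1) * c (-1) * b (-1) 0 * a (-1) *
        b 0 1 * c (-1)] j * cusp j := by
    decide +kernel
  rw [h, mul_inv_cancel_right]
  fin_cases j <;> simp [Subgroup.mul_mem_cancel_right, a_mem, b_mem, c_mem]

/-- Modulo `Λ` on the left, `cusp j * U r` depends only on the integer part of `r` modulo the
width of the cusp. -/
lemma exists_cusp_eq (j : Fin 4) {r s : R5} (h : width j ∣ r.re - s.re) :
    ∃ g ∈ Λ, cusp j * U r = g * cusp j * U s := by
  obtain ⟨q, hq⟩ := h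
  refine ⟨cusp j * U (r - s) * (cusp j)⁻¹, ?_, ?_⟩
  · have hrs : r - s = q • (⟨width j, 0⟩ : R5) + (r.im - s.im) • (⟨0, 1⟩ : R5) := by
      ext <;> simp [hq, mul_comm]
    have key : cusp j * U (r - s) * (cusp j)⁻¹ =
        (cusp j * U ⟨width j, 0⟩ * (cusp j)⁻¹) ^ q *
          (cusp j * U ⟨0, 1⟩ * (cusp j)⁻¹) ^ (r.im - s.im) := by
      rw [conj_zpow, conj_zpow, hrs, U_add, map_zsmul_eq_zpow U_add, map_zsmul_eq_zpow U_add]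
      group
    rw [key]
    exact mul_mem (zpow_mem (cusp_width_mem j) _) (zpow_mem (cusp_sqrt_mem j) _)
  · rw [inv_mul_cancel_right, mul_assoc, ← U_add, sub_add_cancel]

/-- `Edge j m` says that right multiplication by the Weyl element sends the coset of
`cusp j * U m` to a coset of the same shape, up to sign. -/
def Edge (j : Fin 4) (m : ℤ) : Prop :=
  ∃ g ∈ Λ, ∃ (k : Fin 4) (l : ℤ) (e : ℕ),
    cusp j * U ⟨m, 0⟩ * W = g * cusp k * U ⟨l, 0⟩ * Z ^ e

/-- The integer matrix `[[-3, 1], [-1, 0]]`, a short element of `Λ` that accounts for many edges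
of the coset graph. -/
def σ : SL2R5 := a 2 * b (-1) 0 * a (-1) * c (-1) * b (-1) 0

lemma σ_mem : σ ∈ Λ := by
  simp only [σ, Subgroup.mul_mem_cancel_right, a_mem, b_mem, c_mem]

lemma edge_zero : ∀ m ∈ [0, 1, 2, 3, 4, -5, 6, -3, -2, -1], Edge 0 m := by
  simp only [List.forall_mem_cons, List.not_mem_nil, false_imp_iff, implies_true, and_true]
  refine ⟨⟨σ⁻¹, inv_mem σ_mem, 0, 3, 1, by decide +kernel⟩,
    ⟨1, one_mem _, 1, -1, 1, by decide +kernel⟩,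
    ⟨σ, σ_mem, 1, 0, 0, by decide +kernel⟩,
    ⟨σ, σ_mem, 0, 0, 0, by decide +kernel⟩,
    ⟨σ, σ_mem, 2, 0, 0, by decide +kernel⟩,
    ⟨a (-2) * b (-2) 0 * a (-1) * c (-1) * b (-1) 0 * a (-1), ?_, 0, -2, 1, by decide +kernel⟩,
    ⟨a (-1) * b 0 1 * a 1 * c 1 * b (-1) 1 * c (-1) * b 0 (-4) * c (-1) * b (-1) 0 * c 1, ?_,
      1, 4, 1, by decide +kernel⟩,
    ⟨a (-1) * b 1 0 * a 1 * b 0 4 * a 1 * b 1 0 * a (-1), ?_, 1, -5, 0, by decide +kernel⟩,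
    ⟨a 1 * b 1 0 * c 1 * a 1 * b 2 0 * a 2, ?_, 0, -5, 0, by decide +kernel⟩,
    ⟨1, one_mem _, 2, 1, 0, by decide +kernel⟩⟩
  all_goals simp only [Subgroup.mul_mem_cancel_right, a_mem, b_mem, c_mem]

lemma edge_one : ∀ m ∈ [0, 1, 2, 3, 4, -5, -4, -3, -2, -1], Edge 1 m := by
  simp only [List.forall_mem_cons, List.not_mem_nil, false_imp_iff, implies_true, and_true]
  refine ⟨⟨σ⁻¹, inv_mem σ_mem, 0, 2, 1, by decide +kernel⟩,
    ⟨σ⁻¹, inv_mem σ_mem, 1, -2, 0, by decide +kernel⟩,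
    ⟨1, one_mem _, 3, 0, 0, by decide +kernel⟩,
    ⟨c 1 * b 0 (-1) * a 1 * c 1 * b 0 (-1) * a 1 * c 1 * b 0 1 * a 1 * b 2 0 * a (-1), ?_,
      1, -4, 1, by decide +kernel⟩,
    ⟨c (-1) * b (-3) 0 * c (-1) * b 0 (-1) * a 1 * b 0 1 * a (-1) * b (-2) 0 * a (-3), ?_,
      0, 6, 0, by decide +kernel⟩,
    ⟨a (-1) * b 0 1 * a 1 * b 4 0 * a 1 * b 0 1 * a (-1), ?_, 0, -3, 1, by decide +kernel⟩,
    ⟨a (-1) * b 0 1 * c (-1) * b (-1) 0 * a (-1) * b 0 (-1) * c (-1) * a (-1) * b 0 1 * c (-1) *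
      b (-1) 0 * c 1, ?_, 1, 3, 0, by decide +kernel⟩,
    ⟨σ, σ_mem, 3, 1, 0, by decide +kernel⟩,
    ⟨σ, σ_mem, 1, 1, 1, by decide +kernel⟩,
    ⟨1, one_mem _, 0, 1, 0, by decide +kernel⟩⟩
  all_goals simp only [Subgroup.mul_mem_cancel_right, a_mem, b_mem, c_mem]

lemma edge_two : ∀ m ∈ [0, 1], Edge 2 m := by
  simp only [List.forall_mem_cons, List.not_mem_nil, false_imp_iff, implies_true, and_true]
  exact ⟨⟨σ⁻¹, inv_mem σ_mem, 0, 4, 1, by decide +kernel⟩,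
    ⟨1, one_mem _, 0, -1, 1, by decide +kernel⟩⟩

lemma edge_three : ∀ m ∈ [0, 1], Edge 3 m := by
  simp only [List.forall_mem_cons, List.not_mem_nil, false_imp_iff, implies_true, and_true]
  exact ⟨⟨1, one_mem _, 1, 2, 1, by decide +kernel⟩,
    ⟨σ⁻¹, inv_mem σ_mem, 1, -3, 1, by decide +kernel⟩⟩

/-- The tabulated edges cover every residue class modulo the width of the cusp. -/
lemma exists_edge (j : Fin 4) (n : ℤ) : ∃ m, width j ∣ n - m ∧ Edge j m := by
  have h10 : n % 10 = 0 ∨ n % 10 = 1 ∨ n % 10 = 2 ∨ n % 10 = 3 ∨ n % 10 = 4 ∨ n % 10 = 5 ∨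
      n % 10 = 6 ∨ n % 10 = 7 ∨ n % 10 = 8 ∨ n % 10 = 9 := by lia
  have h2 : n % 2 = 0 ∨ n % 2 = 1 := by lia
  fin_cases j
  · suffices ∃ m ∈ [0, 1, 2, 3, 4, -5, 6, -3, -2, -1], (10 : ℤ) ∣ n - m from
      this.imp fun m hm => ⟨hm.2, edge_zero m hm.1⟩
    simp only [List.exists_mem_cons_iff, List.not_mem_nil, false_and, exists_false, or_false]
    lia
  · suffices ∃ m ∈ [0, 1, 2, 3, 4, -5, -4, -3, -2, -1], (10 : ℤ) ∣ n - m from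
      this.imp fun m hm => ⟨hm.2, edge_one m hm.1⟩
    simp only [List.exists_mem_cons_iff, List.not_mem_nil, false_and, exists_false, or_false]
    lia
  · suffices ∃ m ∈ [0, 1], (2 : ℤ) ∣ n - m from
      this.imp fun m hm => ⟨hm.2, edge_two m hm.1⟩
    simp only [List.exists_mem_cons_iff, List.not_mem_nil, false_and, exists_false, or_false]
    lia
  · suffices ∃ m ∈ [0, 1], (2 : ℤ) ∣ n - m from
      this.imp fun m hm => ⟨hm.2, edge_three m hm.1⟩
    simp only [List.exists_mem_cons_iff, List.not_mem_nil, false_and, exists_false, or_false]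
    lia

/-- The union of the right cosets of `Λ` represented by the matrices `± cusp j * U r`. -/
def Reach (g : SL2R5) : Prop :=
  ∃ h ∈ Λ, ∃ (j : Fin 4) (r : R5) (e : ℕ), g = h * cusp j * U r * Z ^ e

lemma Z_pow_comm (g : SL2R5) (e : ℕ) : Z ^ e * g = g * Z ^ e :=
  Commute.pow_left (Z_comm g) e

lemma Reach.mul_U {g : SL2R5} (hg : Reach g) (s : R5) : Reach (g * U s) := by
  obtain ⟨h, hh, j, r, e, rfl⟩ := hg
  refine ⟨h, hh, j, r + s, e, ?_⟩
  rw [mul_assoc _ (Z ^ e), Z_pow_comm, U_add]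
  simp only [mul_assoc]

lemma Reach.mul_W {g : SL2R5} (hg : Reach g) : Reach (g * W) := by
  obtain ⟨h, hh, j, r, e, rfl⟩ := hg
  obtain ⟨m, hm, g', hg', k, l, e', hE⟩ := exists_edge j r.re
  obtain ⟨g'', hg'', hr⟩ := exists_cusp_eq j (r := r) (s := ⟨m, 0⟩) hm
  refine ⟨h * g'' * g', mul_mem (mul_mem hh hg'') hg', k, ⟨l, 0⟩, e' + e, ?_⟩
  calc h * cusp j * U r * Z ^ e * W
      = h * (cusp j * U r) * W * Z ^ e := by
        rw [mul_assoc _ (Z ^ e), Z_pow_comm]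
        simp only [mul_assoc]
    _ = h * g'' * (cusp j * U ⟨m, 0⟩ * W) * Z ^ e := by
        rw [hr]
        simp only [mul_assoc]
    _ = _ := by
        rw [hE, pow_add]
        simp only [mul_assoc]

lemma Reach.mul_W_inv {g : SL2R5} (hg : Reach g) : Reach (g * W⁻¹) := by
  have h : W⁻¹ = W * W * W := by decide +kernel
  rw [h, ← mul_assoc, ← mul_assoc]
  exact hg.mul_W.mul_W.mul_W

/-! ### Generation of `SL₂(ℤ[√5])` by elementary matrices -/

lemma exists_centered (P n : ℤ) (hn : n ≠ 0) : ∃ s, 2 * |P - s * n| ≤ |n| := by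
  have h1 := Int.emod_nonneg P hn
  have h2 := Int.emod_lt_abs P hn
  have h3 := Int.emod_add_mul_ediv P n
  by_cases h : 2 * (P % n) ≤ |n|
  · refine ⟨P / n, ?_⟩
    rw [show P - P / n * n = P % n by linarith, abs_of_nonneg h1]
    exact h
  · refine ⟨P / n + n.sign, ?_⟩
    have h4 := Int.sign_mul_self_eq_abs n
    rw [show P - (P / n + n.sign) * n = P % n - |n| by linarith, abs_of_nonpos (by linarith)]
    linarith

/-- Division with remainder in `ℤ[√5]`, in coordinates: a point of the plane is within norm
distance less than `1` of a lattice point unless it is congruent to `(1/2, 1/2)`. -/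
lemma exists_quotient (P Q n : ℤ) (hn : n ≠ 0) : ∃ s t : ℤ,
    |(P - s * n) ^ 2 - 5 * (Q - t * n) ^ 2| < n ^ 2 ∨
      (2 * (P - s * n) = n ∧ 2 * (Q - t * n) = n) := by
  obtain ⟨s, hs⟩ := exists_centered P n hn
  obtain ⟨t, ht⟩ := exists_centered Q n hn
  have hn' : 0 < |n| := abs_pos.mpr hn
  have hs2 : 4 * (P - s * n) ^ 2 ≤ n ^ 2 := by
    rw [← sq_abs (P - s * n), ← sq_abs n]
    nlinarith [abs_nonneg (P - s * n)]
  have ht2 : 4 * (Q - t * n) ^ 2 ≤ n ^ 2 := by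
    rw [← sq_abs (Q - t * n), ← sq_abs n]
    nlinarith [abs_nonneg (Q - t * n)]
  have hnn : 0 < n ^ 2 := by positivity
  by_cases h1 : 5 * (Q - t * n) ^ 2 < n ^ 2 + (P - s * n) ^ 2
  · refine ⟨s, t, Or.inl ?_⟩
    rw [abs_lt]
    constructor <;> nlinarith [sq_nonneg (Q - t * n)]
  push Not at h1
  -- The nearest lattice point fails; its neighbour on the other side of `P` is used instead.
  obtain ⟨s', hs'⟩ : ∃ s', |P - s' * n| = |n| - |P - s * n| := by
    rcases abs_cases (P - s * n) with ⟨h, h'⟩ | ⟨h, h'⟩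
    · refine ⟨s + n.sign, ?_⟩
      rw [show P - (s + n.sign) * n = (P - s * n) - n.sign * n by ring,
        Int.sign_mul_self_eq_abs, abs_of_nonpos (by linarith)]
      linarith
    · refine ⟨s - n.sign, ?_⟩
      rw [show P - (s - n.sign) * n = (P - s * n) + n.sign * n by ring,
        Int.sign_mul_self_eq_abs, abs_of_nonneg (by linarith)]
      linarith
  by_cases h2 : 2 * |P - s * n| = |n| ∧ 2 * |Q - t * n| = |n|
  · have half : ∀ X s : ℤ, 2 * |X - s * n| = |n| → ∃ s', 2 * (X - s' * n) = n := by
      intro X s h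
      rw [← abs_two, ← abs_mul, abs_eq_abs] at h
      rcases h with h | h
      · exact ⟨s, h⟩
      · exact ⟨s - 1, by linarith⟩
    obtain ⟨s₁, h₁⟩ := half P s h2.1
    obtain ⟨t₁, h₂⟩ := half Q t h2.2
    exact ⟨s₁, t₁, Or.inr ⟨h₁, h₂⟩⟩
  · refine ⟨s', t, Or.inl ?_⟩
    rw [← sq_abs (P - s' * n), hs', ← sq_abs (Q - t * n), ← sq_abs n]
    rw [← sq_abs (P - s * n), ← sq_abs (Q - t * n), ← sq_abs n] at h1
    have hx := abs_nonneg (P - s * n)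
    have hy := abs_nonneg (Q - t * n)
    generalize |P - s * n| = x at *
    generalize |Q - t * n| = y at *
    generalize |n| = m at *
    rw [abs_lt]
    refine ⟨?_, by nlinarith⟩
    rcases lt_or_eq_of_le hs with h | h
    · nlinarith
    · have h' : 2 * y < m := lt_of_le_of_ne ht fun h' => h2 ⟨h, h'⟩
      nlinarith

/-- Division with remainder in `ℤ[√5]`. It fails exactly when the quotient is congruent to
`(1 + √5) / 2`, reflecting that `ℤ[√5]` is not integrally closed. -/
lemma exists_norm_lt (x d : R5) (hd : d ≠ 0) : ∃ q : R5,
    (x - q * d).norm.natAbs < d.norm.natAbs ∨ 2 * (x - q * d) = d * ⟨1, 1⟩ := by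
  have h5 : ∀ n : ℤ, (5 : ℤ) ≠ n * n := by
    intro n h
    have h₁ : n ≤ 2 := by nlinarith
    have h₂ : -2 ≤ n := by nlinarith
    interval_cases n <;> lia
  have hn : d.norm ≠ 0 := fun h => hd ((Zsqrtd.norm_eq_zero h5 d).mp h)
  obtain ⟨s, t, h⟩ := exists_quotient (x * star d).re (x * star d).im d.norm hn
  have hmul : (x - ⟨s, t⟩ * d) * star d =
      ⟨(x * star d).re - s * d.norm, (x * star d).im - t * d.norm⟩ := by
    ext <;> simp [Zsqrtd.norm_def] <;> ring
  refine ⟨⟨s, t⟩, ?_⟩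
  rcases h with h | ⟨h₁, h₂⟩
  · left
    have hnorm := congrArg Zsqrtd.norm hmul
    rw [Zsqrtd.norm_mul, Zsqrtd.norm_conj, Zsqrtd.norm_def
      (⟨(x * star d).re - s * d.norm, (x * star d).im - t * d.norm⟩ : R5)] at hnorm
    dsimp only at hnorm
    rw [show ((x * star d).re - s * d.norm) ^ 2 - 5 * ((x * star d).im - t * d.norm) ^ 2 =
      (x - ⟨s, t⟩ * d).norm * d.norm by rw [hnorm]; ring, abs_mul, ← sq_abs d.norm, sq] at h
    have := lt_of_mul_lt_mul_right h (abs_nonneg _)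
    zify
    exact this
  · right
    have hzero : (2 * (x - ⟨s, t⟩ * d) - d * ⟨1, 1⟩) * star d = 0 := by
      rw [sub_mul, mul_assoc 2, hmul, mul_right_comm d, ← Zsqrtd.norm_eq_mul_conj]
      ext
      all_goals
        simp at h₁ h₂ ⊢
        linarith
    have hnorm := congrArg Zsqrtd.norm hzero
    rw [Zsqrtd.norm_mul, Zsqrtd.norm_conj, Zsqrtd.norm_zero, mul_eq_zero,
      or_iff_left hn, Zsqrtd.norm_eq_zero h5, sub_eq_zero] at hnorm
    exact hnorm

/-- Reduction modulo the prime `(2, 1 + √5)`, the conductor of `ℤ[√5]`. -/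
def parity : R5 →+* ZMod 2 := Zsqrtd.lift ⟨1, by decide⟩

lemma parity_apply (z : R5) : parity z = ((z.re + z.im : ℤ) : ZMod 2) := by
  simp [parity, Zsqrtd.lift]

/-- For the bottom row of a matrix in `SL₂(ℤ[√5])` division with remainder always succeeds: in the
exceptional case both entries would lie in the conductor. -/
lemma exists_norm_lt_row (g : SL2R5) (hd : g.1 1 1 ≠ 0) : ∃ q : R5,
    (g.1 1 0 - q * g.1 1 1).norm.natAbs < (g.1 1 1).norm.natAbs := by
  obtain ⟨q, h | h⟩ := exists_norm_lt (g.1 1 0) (g.1 1 1) hd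
  · exact ⟨q, h⟩
  exfalso
  have hdet := g.2
  rw [det_fin_two] at hdet
  have hre := congrArg Zsqrtd.re h
  have him := congrArg Zsqrtd.im h
  have hpd : parity (g.1 1 1) = 0 := by
    rw [parity_apply, ZMod.intCast_zmod_eq_zero_iff_dvd]
    simp at him
    lia
  have hpq : parity (g.1 1 0 - q * g.1 1 1) = 0 := by
    rw [parity_apply, ZMod.intCast_zmod_eq_zero_iff_dvd]
    generalize g.1 1 0 - q * g.1 1 1 = y at *
    simp at hre him
    lia
  rw [map_sub, map_mul, hpd, mul_zero, sub_zero] at hpq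
  have hp := congrArg parity hdet
  rw [map_sub, map_mul, map_mul, hpd, hpq] at hp
  simp at hp

/-- The subgroup generated by the upper unipotent matrices and the Weyl element. -/
def E : Subgroup SL2R5 := Subgroup.closure (Set.range U ∪ {W})

lemma U_mem_E (r : R5) : U r ∈ E := Subgroup.subset_closure (Or.inl ⟨r, rfl⟩)

lemma W_mem_E : W ∈ E := Subgroup.subset_closure (Or.inr rfl)

lemma V_mem_E (r : R5) : V r ∈ E := by
  have h : W * V r = U (-r) * W := by
    apply Subtype.ext
    change !![0, 1; -1, 0] * !![1, 0; r, 1] = !![1, -r; 0, 1] * !![0, 1; -1, 0]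
    simp
  rw [← inv_mul_cancel_left W (V r), h]
  exact mul_mem (inv_mem W_mem_E) (mul_mem (U_mem_E _) W_mem_E)

lemma upper_mem_E (g : SL2R5) (hg : g.1 1 0 = 0) : g ∈ E := by
  have hdet := g.2
  rw [det_fin_two, hg, mul_zero, sub_zero] at hdet
  -- The diagonal part is a product of unipotents by Whitehead's identity.
  have h : g * W = U (g.1 0 1 * g.1 0 0) * (U (g.1 0 0) * V (-g.1 1 1) * U (g.1 0 0)) := by
    apply Subtype.ext
    change g.1 * !![0, 1; -1, 0] = !![1, g.1 0 1 * g.1 0 0; 0, 1] *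
      (!![1, g.1 0 0; 0, 1] * !![1, 0; -g.1 1 1, 1] * !![1, g.1 0 0; 0, 1])
    generalize g.1 = M at *
    ext1 i j
    fin_cases i <;> fin_cases j <;> simp [mul_apply, Fin.sum_univ_two, hg] <;> grind
  rw [← mul_inv_cancel_right g W, h]
  exact mul_mem (mul_mem (U_mem_E _) (mul_mem (mul_mem (U_mem_E _) (V_mem_E _)) (U_mem_E _)))
    (inv_mem W_mem_E)

/-- `SL₂(ℤ[√5])` is generated by elementary matrices: the Euclidean algorithm on the bottom row
terminates because the norm of its last entry decreases. -/
lemma mem_E (g : SL2R5) : g ∈ E := by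
  induction hn : (g.1 1 1).norm.natAbs using Nat.strong_induction_on generalizing g with
  | _ n ih =>
    by_cases hd : g.1 1 1 = 0
    · rw [← mul_inv_cancel_right g W]
      refine mul_mem (upper_mem_E _ ?_) (inv_mem W_mem_E)
      change (g.1 * !![0, 1; -1, 0] : Matrix (Fin 2) (Fin 2) R5) 1 0 = 0
      simp [mul_apply, hd]
    · obtain ⟨q, hq⟩ := exists_norm_lt_row g hd
      have hentry : (g * V (-q) * W).1 1 1 = g.1 1 0 - q * g.1 1 1 := by
        change (g.1 * !![1, 0; -q, 1] * !![0, 1; -1, 0] : Matrix (Fin 2) (Fin 2) R5) 1 1 = _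
        simp [mul_apply, Fin.sum_univ_two]
        ring
      rw [← mul_inv_cancel_right g (V (-q)), ← mul_inv_cancel_right (g * V (-q)) W]
      refine mul_mem (mul_mem (ih _ ?_ _ rfl) (inv_mem W_mem_E)) (inv_mem (V_mem_E _))
      rw [hentry, ← hn]
      exact hq

/-! ### Finite index -/

/-- Every coset is in the list, since the list contains the identity and is stable under the
generators `U s` and `W` of `SL₂(ℤ[√5])`. -/
lemma reach (g : SL2R5) : Reach g := by
  induction mem_E g using Subgroup.closure_induction_right with
  | one => exact ⟨1, one_mem _, 0, 0, 0, by decide +kernel⟩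
  | mul_right x _ y hy hx =>
    rcases hy with ⟨r, rfl⟩ | rfl
    · exact hx.mul_U r
    · exact hx.mul_W
  | mul_inv_cancel x _ y hy hx =>
    rcases hy with ⟨r, rfl⟩ | rfl
    · have h : (U r)⁻¹ = U (-r) := by
        simpa using (map_zsmul_eq_zpow U_add r (-1)).symm
      rw [h]
      exact hx.mul_U (-r)
    · exact hx.mul_W_inv

lemma Z_pow_mod (e : ℕ) : Z ^ e = Z ^ (e % 2) := by
  rw [← Nat.mod_add_div e 2, pow_add, pow_mul, sq, Z_mul_Z]
  simp

lemma finiteIndex : Λ.FiniteIndex := by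
  rw [Subgroup.finiteIndex_iff_finite_quotient]
  let f : Fin 4 × Fin 10 × Fin 2 → SL2R5 ⧸ Λ := fun p =>
    QuotientGroup.mk (cusp p.1 * U ⟨p.2.1.val, 0⟩ * Z ^ p.2.2.val)⁻¹
  refine Finite.of_surjective f fun x => ?_
  obtain ⟨g, rfl⟩ := QuotientGroup.mk_surjective x
  obtain ⟨h, hh, j, r, e, hg⟩ := reach g⁻¹
  have hw : ∀ j, width j ∣ 10 := by decide
  have hm : 0 ≤ r.re % 10 ∧ r.re % 10 < 10 := by lia
  obtain ⟨h', hh', hr⟩ := exists_cusp_eq j (r := r) (s := ⟨r.re % 10, 0⟩)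
    ((hw j).trans (by dsimp only; lia))
  refine ⟨(j, ⟨(r.re % 10).toNat, by lia⟩, ⟨e % 2, by lia⟩), ?_⟩
  simp only [f]
  rw [QuotientGroup.eq, inv_inv, Int.toNat_of_nonneg hm.1, ← Z_pow_mod]
  have hprod : (cusp j * U ⟨r.re % 10, 0⟩ * Z ^ e) * g = (h * h')⁻¹ := by
    have hinv : g⁻¹ = h * h' * (cusp j * U ⟨r.re % 10, 0⟩ * Z ^ e) := by
      rw [hg, mul_assoc h, hr]
      simp only [mul_assoc]
    rw [← inv_inv g, hinv]
    group
  rw [hprod]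
  exact inv_mem (mul_mem hh hh')

end Monodromy

/-- **Arithmeticity of the monodromy of the Wiman–Edge pencil** (concrete form):
the subgroup of `SL₂(ℤ[√5])` generated by the four monodromy matrices
`A, A′, B, B′` has finite index in `SL₂(ℤ[√5])`. -/
theorem monodromy_finiteIndex :
    (Subgroup.closure ({A, A', B, B'} : Set SL2R5)).FiniteIndex := by
  exact Monodromy.finiteIndex
end

section
/- Let L ⊆ R² be an R-submodule such that L ≠ 0, L ≠ R², and the quotient R²/L is torsion-free as an abelian group (i.e. for every v ∈ R² and every nonzero integer n, if n·v ∈ L then v ∈ L). Then there exists g ∈ SL₂(R) such that the image of L under v ↦ g·v equals either R × {0}, or the ℤ-span L_X of the two vectors (2, 1+√5) and (1+√5, 3+√5) (which is itself an R-submodule of R²). (Thus SL₂(ℤ[√5]) has exactly two cusps, ∞₀ and ∞_X.) -/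
/-- The cusp-module of type `∞₀`: the first summand `R × {0}` of `R²`. -/
def cusp0 : Submodule R5 (Fin 2 → R5) := Submodule.span R5 {![1, 0]}

/-- The cusp-module of type `∞_X`: the `R`-submodule generated by `(2, 1+√5)` and
`(1+√5, 3+√5)` (the image of `a ↦ (2a, 2Xa)`, `a ∈ 𝒪`). -/
def cuspX : Submodule R5 (Fin 2 → R5) :=
  Submodule.span R5 {![2, 1 + Zsqrtd.sqrtd], ![1 + Zsqrtd.sqrtd, 3 + Zsqrtd.sqrtd]}

/-! ### Near-Euclidean division in `ℤ[√5]` -/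

/-- Modulo `ℤ²`, every rational point satisfies `|x² - 5y²| < 1` for some representative,
except the class of `(1/2, 1/2)`. -/
lemma exists_int_sub_lt (x y : ℚ) : ∃ m k : ℤ,
    |(x - m) ^ 2 - 5 * (y - k) ^ 2| < 1 ∨ (x - m = 1 / 2 ∧ y - k = 1 / 2) := by
  obtain ⟨m, u, hx, hu⟩ : ∃ (m : ℤ) (u : ℚ), x = m + u ∧ |u| ≤ 1 / 2 :=
    ⟨round x, x - round x, by ring, abs_sub_round x⟩
  obtain ⟨k, v, hy, hv⟩ : ∃ (k : ℤ) (v : ℚ), y = k + v ∧ |v| ≤ 1 / 2 :=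
    ⟨round y, y - round y, by ring, abs_sub_round y⟩
  subst hx hy
  rw [abs_le] at hu hv
  obtain ⟨hu1, hu2⟩ := hu
  obtain ⟨hv1, hv2⟩ := hv
  have hv4 : v ^ 2 ≤ 1 / 4 := by nlinarith
  have hu4 : u ^ 2 ≤ 1 / 4 := by nlinarith
  by_cases h : 5 * v ^ 2 < 1 + u ^ 2
  · refine ⟨m, k, Or.inl ?_⟩
    rw [abs_lt]
    constructor <;> ring_nf <;> nlinarith
  · push Not at h
    -- Replacing `u` by `u - 1` (if `0 ≤ u`) or `u + 1` (if `u ≤ 0`) makes its absolute value at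
    -- least `1/2`, so `5 v² ≤ 5/4 ≤ 1 + (u ∓ 1)²`, with equality only if `|u| = |v| = 1/2`.
    by_cases hc : (u = 1 / 2 ∨ u = -1 / 2) ∧ (v = 1 / 2 ∨ v = -1 / 2)
    · obtain ⟨rfl | rfl, rfl | rfl⟩ := hc
      · exact ⟨m, k, Or.inr (by constructor <;> ring)⟩
      · exact ⟨m, k - 1, Or.inr (by push_cast; constructor <;> ring)⟩
      · exact ⟨m - 1, k, Or.inr (by push_cast; constructor <;> ring)⟩
      · exact ⟨m - 1, k - 1, Or.inr (by push_cast; constructor <;> ring)⟩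
    · have key : u ^ 2 < 1 / 4 ∨ v ^ 2 < 1 / 4 := by
        by_contra! hcon
        refine hc ⟨?_, ?_⟩
        · have : (u - 1 / 2) * (u + 1 / 2) = 0 := by nlinarith
          rcases mul_eq_zero.mp this with h' | h'
          · left; linarith
          · right; linarith
        · have : (v - 1 / 2) * (v + 1 / 2) = 0 := by nlinarith
          rcases mul_eq_zero.mp this with h' | h'
          · left; linarith
          · right; linarith
      rcases le_total 0 u with h0 | h0
      · refine ⟨m + 1, k, Or.inl ?_⟩
        rw [abs_lt]
        push_cast
        constructor <;> ring_nf
        · rcases key with key | key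
          · have : u < 1 / 2 := by nlinarith
            nlinarith
          · nlinarith
        · nlinarith
      · refine ⟨m - 1, k, Or.inl ?_⟩
        rw [abs_lt]
        push_cast
        constructor <;> ring_nf
        · rcases key with key | key
          · have : -1 / 2 < u := by nlinarith
            nlinarith
          · nlinarith
        · nlinarith

lemma norm_ne_zero_R5 {b : R5} (hb : b ≠ 0) : b.norm ≠ 0 := by
  have : ∀ n : ℤ, (5 : ℤ) ≠ n * n := by
    intro n h
    have h1 : n < 3 := by nlinarith
    have h2 : -3 < n := by nlinarith
    interval_cases n <;> omega
  rwa [Ne, Zsqrtd.norm_eq_zero this]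

instance isDomain_R5 : IsDomain R5 := by
  have : NoZeroDivisors R5 := ⟨fun {a b} h => by
    by_contra! hc
    have h1 := Zsqrtd.norm_mul a b
    rw [h, Zsqrtd.norm_zero] at h1
    exact mul_ne_zero (norm_ne_zero_R5 hc.1) (norm_ne_zero_R5 hc.2) h1.symm⟩
  exact NoZeroDivisors.to_isDomain _

/-- Division with remainder by `b` works in `ℤ[√5]`, unless `a / b` is congruent to `(1+√5)/2`. -/
lemma exists_sub_norm_lt (a b : R5) (hb : b ≠ 0) : ∃ q : R5,
    (a - q * b).norm.natAbs < b.norm.natAbs ∨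
      2 * (a - q * b) = (1 + Zsqrtd.sqrtd) * b := by
  have hN := norm_ne_zero_R5 hb
  have hNq : (b.norm : ℚ) ≠ 0 := by exact_mod_cast hN
  obtain ⟨m, k, h⟩ := exists_int_sub_lt ((a * star b).re / b.norm) ((a * star b).im / b.norm)
  refine ⟨⟨m, k⟩, ?_⟩
  obtain ⟨p, hp⟩ : ∃ p : R5, p = (a - ⟨m, k⟩ * b) * star b := ⟨_, rfl⟩
  have hbs : b * star b = (b.norm : R5) := (Zsqrtd.norm_eq_mul_conj b).symm
  have hp' : p = a * star b - ⟨m, k⟩ * (b.norm : R5) := by rw [hp, ← hbs]; ring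
  have hre : (p.re : ℚ) = ((a * star b).re / b.norm - m) * b.norm := by
    rw [hp']; field_simp; simp [mul_comm]
  have him : (p.im : ℚ) = ((a * star b).im / b.norm - k) * b.norm := by
    rw [hp']; field_simp; simp [mul_comm]
  rcases h with h | ⟨h1, h2⟩
  · left
    have hnp : p.norm = (a - ⟨m, k⟩ * b).norm * b.norm := by
      rw [hp, Zsqrtd.norm_mul, Zsqrtd.norm_conj]
    have hnp2 : (p.norm : ℚ) = (((a * star b).re / b.norm - m) ^ 2
        - 5 * ((a * star b).im / b.norm - k) ^ 2) * b.norm ^ 2 := by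
      rw [Zsqrtd.norm_def]; push_cast; rw [hre, him]; ring
    have h3 : |(p.norm : ℚ)| < |(b.norm : ℚ)| * |(b.norm : ℚ)| := by
      rw [hnp2, abs_mul, abs_pow, ← pow_two]
      have : 0 < |(b.norm : ℚ)| ^ 2 := by positivity
      nlinarith
    rw [hnp] at h3
    push_cast at h3
    rw [abs_mul] at h3
    have h4 := lt_of_mul_lt_mul_right h3 (abs_nonneg _)
    have h5 : |(a - ⟨m, k⟩ * b).norm| < |b.norm| := by exact_mod_cast h4
    zify
    exact h5
  · right
    have hs : star b ≠ 0 := fun h0 => by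
      apply hN; rw [← Zsqrtd.norm_conj, h0, Zsqrtd.norm_zero]
    apply mul_right_cancel₀ hs
    rw [mul_assoc, ← hp, mul_assoc, hbs]
    rw [h1] at hre
    rw [h2] at him
    have e1 : 2 * p.re = b.norm := by
      have : (2 * p.re : ℚ) = b.norm := by rw [hre]; ring
      exact_mod_cast this
    have e2 : 2 * p.im = b.norm := by
      have : (2 * p.im : ℚ) = b.norm := by rw [him]; ring
      exact_mod_cast this
    ext
    · simpa using e1
    · simpa using e2

/-! ### Reduction of vectors under `SL₂(ℤ[√5])` -/

/-- Euclidean algorithm: every vector is moved by `SL₂(ℤ[√5])` to the line through `(1, 0)` or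
the line through `(1, (1+√5)/2)`. -/
lemma exists_reduce (a b : R5) : ∃ g : SL2R5,
    (g.val.mulVec ![a, b]) 1 = 0 ∨
      (1 + Zsqrtd.sqrtd) * (g.val.mulVec ![a, b]) 0 = 2 * (g.val.mulVec ![a, b]) 1 := by
  induction hn : b.norm.natAbs using Nat.strong_induction_on generalizing a b with
  | _ n ih =>
    by_cases hb : b = 0
    · exact ⟨1, Or.inl (by simp [hb])⟩
    obtain ⟨q, hq | hq⟩ := exists_sub_norm_lt a b hb
    · obtain ⟨g, hg⟩ := ih _ (hn ▸ hq) (-b) (a - q * b) rfl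
      let g₁ : SL2R5 := ⟨!![0, -1; 1, -q], by simp [Matrix.det_fin_two_of]⟩
      have h1 : g₁.val.mulVec ![a, b] = ![-b, a - q * b] := by
        ext i <;> fin_cases i <;> simp [g₁, Matrix.mulVec, dotProduct, Fin.sum_univ_two] <;> ring
      refine ⟨g * g₁, ?_⟩
      have h2 : (g * g₁).val.mulVec ![a, b] = g.val.mulVec ![-b, a - q * b] := by
        rw [← h1, Matrix.mulVec_mulVec]; rfl
      rw [h2]
      exact hg
    · -- With `r = a - q b` and `2 r = (1 + √5) b`, the image `(b, (1 + √5) b - r)` is `(b, r)`.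
      let g₁ : SL2R5 := ⟨!![0, 1; -1, q + 1 + Zsqrtd.sqrtd], by simp [Matrix.det_fin_two_of]⟩
      have h1 : g₁.val.mulVec ![a, b] = ![b, -a + (q + 1 + Zsqrtd.sqrtd) * b] := by
        ext i <;> fin_cases i <;> simp [g₁, Matrix.mulVec, dotProduct, Fin.sum_univ_two]
      refine ⟨g₁, Or.inr ?_⟩
      rw [h1]
      simp only [Matrix.cons_val_zero, Matrix.cons_val_one]
      linear_combination hq

/-! ### Submodules with torsion-free quotient -/

section Saturated

variable {L : Submodule R5 (Fin 2 → R5)}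

lemma mem_of_smul_mem
    (htf : ∀ (v : Fin 2 → R5) (n : ℤ), n ≠ 0 → n • v ∈ L → v ∈ L)
    {c : R5} (hc : c ≠ 0) {v : Fin 2 → R5} (h : c • v ∈ L) : v ∈ L := by
  refine htf v c.norm (norm_ne_zero_R5 hc) ?_
  have h1 := L.smul_mem (star c) h
  rw [smul_smul, mul_comm, ← Zsqrtd.norm_eq_mul_conj, Int.cast_smul_eq_zsmul] at h1
  exact h1

lemma eq_top_of_det_ne_zero
    (htf : ∀ (v : Fin 2 → R5) (n : ℤ), n ≠ 0 → n • v ∈ L → v ∈ L)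
    {v w : Fin 2 → R5} (hv : v ∈ L) (hw : w ∈ L) (hd : v 0 * w 1 - v 1 * w 0 ≠ 0) : L = ⊤ := by
  rw [eq_top_iff]
  intro u _
  -- Cramer's rule expresses `det(v, w) • u` through `v` and `w`.
  refine mem_of_smul_mem htf hd ?_
  have : (v 0 * w 1 - v 1 * w 0) • u
      = (u 0 * w 1 - u 1 * w 0) • v + (v 0 * u 1 - v 1 * u 0) • w := by
    ext1 i
    fin_cases i <;> simp <;> ring
  rw [this]
  exact L.add_mem (L.smul_mem _ hv) (L.smul_mem _ hw)

lemma eq_cusp0 (htop : L ≠ ⊤)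
    (htf : ∀ (v : Fin 2 → R5) (n : ℤ), n ≠ 0 → n • v ∈ L → v ∈ L)
    {w : Fin 2 → R5} (hw : w ∈ L) (hw0 : w ≠ 0) (h : w 1 = 0) : L = cusp0 := by
  have hc : w 0 ≠ 0 := fun h0 => hw0 (by ext1 i; fin_cases i <;> simp [h0, h])
  have h1 : ![1, 0] ∈ L := by
    refine mem_of_smul_mem htf hc ?_
    convert hw using 1
    ext1 i
    fin_cases i <;> simp [h]
  apply le_antisymm
  · intro u hu
    have hd : u 1 = 0 := by
      by_contra hne
      exact htop (eq_top_of_det_ne_zero htf h1 hu (by simpa using hne))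
    refine Submodule.mem_span_singleton.mpr ⟨u 0, ?_⟩
    ext1 i
    fin_cases i <;> simp [hd]
  · rw [cusp0, Submodule.span_le]
    simpa using h1

lemma mem_zspan_of_eq {u : Fin 2 → R5} (h : (1 + Zsqrtd.sqrtd) * u 0 = 2 * u 1) :
    u ∈ Submodule.span ℤ
      ({![2, 1 + Zsqrtd.sqrtd], ![1 + Zsqrtd.sqrtd, 3 + Zsqrtd.sqrtd]} :
        Set (Fin 2 → R5)) := by
  have hre := congrArg Zsqrtd.re h
  have him := congrArg Zsqrtd.im h
  simp at hre him
  obtain ⟨m, hm⟩ : ∃ m, (u 0).re = 2 * m + (u 0).im :=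
    ⟨(u 1).im - (u 0).im, by linarith⟩
  refine Submodule.mem_span_pair.mpr ⟨m, (u 0).im, ?_⟩
  ext1 i
  fin_cases i
  · ext <;> simp <;> linarith
  · ext <;> simp <;> linarith

lemma zspan_le_cuspX {u : Fin 2 → R5}
    (h : u ∈ Submodule.span ℤ
      ({![2, 1 + Zsqrtd.sqrtd], ![1 + Zsqrtd.sqrtd, 3 + Zsqrtd.sqrtd]} :
        Set (Fin 2 → R5))) : u ∈ cuspX :=
  Submodule.span_subset_span ℤ R5 _ h

/-- `cuspX` consists of the vectors of `R²` on the line through `(1, (1+√5)/2)`. -/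
lemma mem_cuspX {u : Fin 2 → R5} : u ∈ cuspX ↔ (1 + Zsqrtd.sqrtd) * u 0 = 2 * u 1 := by
  refine ⟨fun h => ?_, fun h => zspan_le_cuspX (mem_zspan_of_eq h)⟩
  obtain ⟨x, y, rfl⟩ := Submodule.mem_span_pair.mp h
  have hs : (Zsqrtd.sqrtd * Zsqrtd.sqrtd : R5) = 5 := by ext <;> simp
  simp
  linear_combination y * hs

lemma eq_cuspX (htop : L ≠ ⊤)
    (htf : ∀ (v : Fin 2 → R5) (n : ℤ), n ≠ 0 → n • v ∈ L → v ∈ L)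
    {w : Fin 2 → R5} (hw : w ∈ L) (hw0 : w ≠ 0)
    (h : (1 + Zsqrtd.sqrtd) * w 0 = 2 * w 1) : L = cuspX := by
  have h2 : (2 : R5) ≠ 0 := by
    intro h0
    simpa using congrArg Zsqrtd.re h0
  have hc : w 0 ≠ 0 := by
    intro h0
    rw [h0, mul_zero, eq_comm, mul_eq_zero] at h
    exact hw0 (by ext1 i; fin_cases i <;> simp [h0, h.resolve_left h2])
  ext u
  rw [mem_cuspX]
  constructor
  · intro hu
    by_contra hne
    refine htop (eq_top_of_det_ne_zero htf hw hu fun h0 => hne ?_)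
    apply mul_left_cancel₀ hc
    linear_combination u 0 * h - 2 * h0
  · intro hu
    refine mem_of_smul_mem htf hc ?_
    have : w 0 • u = u 0 • w := by
      ext1 i
      fin_cases i
      · exact mul_comm _ _
      · apply mul_left_cancel₀ h2
        change 2 * (w 0 * u 1) = 2 * (u 0 * w 1)
        linear_combination u 0 * h - w 0 * hu
    rw [this]
    exact L.smul_mem _ hw

end Saturated


/-- **`SL₂(ℤ[√5])` has exactly two cusps.** The submodule `cuspX` coincides with the
`ℤ`-span of `(2, 1+√5)` and `(1+√5, 3+√5)` (so that `ℤ`-span is itself an `R`-submodule),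
and every nonzero proper `R`-submodule `L ⊆ R²` with torsion-free quotient is carried by
some `g ∈ SL₂(ℤ[√5])` onto either `R × {0}` or `cuspX`. -/
theorem two_cusps (L : Submodule R5 (Fin 2 → R5)) (hbot : L ≠ ⊥) (htop : L ≠ ⊤)
    (htf : ∀ (v : Fin 2 → R5) (n : ℤ), n ≠ 0 → n • v ∈ L → v ∈ L) :
    (cuspX : Set (Fin 2 → R5))
        = (Submodule.span ℤ
            ({![2, 1 + Zsqrtd.sqrtd], ![1 + Zsqrtd.sqrtd, 3 + Zsqrtd.sqrtd]} :
              Set (Fin 2 → R5)) : Set (Fin 2 → R5)) ∧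
    ∃ g : SL2R5,
      Submodule.map (Matrix.mulVecLin g.val) L = cusp0 ∨
      Submodule.map (Matrix.mulVecLin g.val) L = cuspX := by
  refine ⟨Set.Subset.antisymm (fun u hu => mem_zspan_of_eq (mem_cuspX.mp hu))
    (fun u hu => zspan_le_cuspX hu), ?_⟩
  obtain ⟨v, hv, hv0⟩ := L.ne_bot_iff.mp hbot
  obtain ⟨g, hg⟩ := exists_reduce (v 0) (v 1)
  have hvec : ![v 0, v 1] = v := by ext1 i; fin_cases i <;> rfl
  rw [hvec] at hg
  refine ⟨g, ?_⟩
  have hinv : ∀ u, (g⁻¹).val.mulVec (g.val.mulVec u) = u := fun u => by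
    rw [Matrix.mulVec_mulVec, ← Matrix.SpecialLinearGroup.coe_mul, inv_mul_cancel]; simp
  have hinv' : ∀ u, g.val.mulVec ((g⁻¹).val.mulVec u) = u := fun u => by
    rw [Matrix.mulVec_mulVec, ← Matrix.SpecialLinearGroup.coe_mul, mul_inv_cancel]; simp
  have hmem : ∀ u, u ∈ Submodule.map (Matrix.mulVecLin g.val) L ↔ (g⁻¹).val.mulVec u ∈ L := by
    intro u
    rw [Submodule.mem_map]
    constructor
    · rintro ⟨x, hx, rfl⟩
      rwa [Matrix.mulVecLin_apply, hinv]
    · exact fun h => ⟨_, h, by rw [Matrix.mulVecLin_apply, hinv']⟩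
  have htop' : Submodule.map (Matrix.mulVecLin g.val) L ≠ ⊤ := by
    intro h
    refine htop (eq_top_iff.mpr fun u _ => ?_)
    rw [← hinv u, ← hmem, h]
    trivial
  have htf' : ∀ (u : Fin 2 → R5) (n : ℤ), n ≠ 0 →
      n • u ∈ Submodule.map (Matrix.mulVecLin g.val) L →
      u ∈ Submodule.map (Matrix.mulVecLin g.val) L := by
    intro u n hn h
    rw [hmem] at h ⊢
    rw [Matrix.mulVec_smul] at h
    exact htf _ n hn h
  have hw : g.val.mulVec v ∈ Submodule.map (Matrix.mulVecLin g.val) L := by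
    rwa [hmem, hinv]
  have hw0 : g.val.mulVec v ≠ 0 := fun h => hv0 (by rw [← hinv v, h, Matrix.mulVec_zero])
  exact hg.imp (eq_cusp0 htop' htf' hw hw0) (eq_cuspX htop' htf' hw hw0)
end

section
/- Suppose p, q ∈ ℤ are not both zero, and let λ := p·id + q·(2X − 3·id), an endomorphism of V preserving E₀. Assume that s(λx, y) ∈ {−1, 0, 1} for all x ∈ Δ_ir and y ∈ Δ_c, and that at most three of the six basis vectors b ∈ {e, e₀, e₁, e₂, e₃, e₄} satisfy s(λb, e + e₀ + e₁) ≠ 0. Then (p,q) = (±1, 0) or (p,q) = (0, ±1); that is, λ = ±id or λ = ±(2X − 3·id). -/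
/-!
Write `Y = 2X − 3·id` and `y = e + e₀ + e₁ ∈ Δ_c`. The pairings `s(Yb, y)` for
`b = e, e₀, e₁, e₂, e₃, e₄` are `0, 0, 0, 1, -1, 1`, whereas `s(b, y)` are `1, 1, 1, 0, 0, 0`.
Hence the numbers `s(λb, y)` are `p, p, p, q, -q, q` (`sform_bvec`). Since they lie in
`{-1, 0, 1}`, so do `p` and `q`; if both were nonzero, all six pairings would be nonzero,
against the bound three.
-/

/-- Index type for the basis `e, e₀, …, e₄` of `V`: `none ↦ e`, `some i ↦ eᵢ`. -/
abbrev J5 := Option (ZMod 5)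

/-- The 6-dimensional `ℚ`-vector space `V` with basis indexed by `J5`. -/
abbrev V := J5 → ℚ

/-- The basis vector of `V` with index `j`. -/
def bvec : J5 → V := fun j => Pi.single j 1

/-- The basis vector `e`. -/
def eV : V := Pi.single none 1

/-- The basis vectors `eᵢ`, `i ∈ ℤ/5`. -/
def ee (i : ZMod 5) : V := Pi.single (some i) 1

/-- The symmetric bilinear form on `V` for which the basis `e, e₀, …, e₄` is orthonormal. -/
def sform (x y : V) : ℚ := ∑ j : J5, x j * y j

/-- `ε = ½(e + e₀ + e₁ + e₂ + e₃ + e₄)`. -/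
def eps : V := (1 / 2 : ℚ) • (eV + ∑ i : ZMod 5, ee i)

/-- The `ℚ`-linear map `X : V → V` determined by `X(e) = ε` and
`X(eᵢ) = ε − e_{i+2} − e_{i−2}` (indices mod 5); in coordinates,
`(X x)(j) = (Σ_t x_t)/2`, minus `x_{k−2} + x_{k+2}` when `j = some k`. -/
def Xmap : V →ₗ[ℚ] V where
  toFun x := fun j =>
    (∑ t : J5, x t) / 2 +
      (match j with
        | none => 0
        | some k => -(x (some (k - 2))) - x (some (k + 2)))
  map_add' x y := by
    funext j
    rcases j with _ | k <;> simp [Finset.sum_add_distrib] <;> ring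
  map_smul' c x := by
    funext j
    have hs : (∑ i : ZMod 5, c * x (some i)) = c * ∑ i : ZMod 5, x (some i) :=
      (Finset.mul_sum _ _ _).symm
    rcases j with _ | k <;> simp <;> rw [hs] <;> ring

/-- `Δ_ir = {±e, ±e₀, …, ±e₄}`. -/
def DeltaIr : Set V := {x | x = eV ∨ x = -eV ∨ ∃ i : ZMod 5, x = ee i ∨ x = -ee i}

/-- `Δ_c = {±(e + eᵢ + e_{i+1})} ∪ {±(eᵢ − e_{i−2} − e_{i+2})}`, `i ∈ ℤ/5`. -/
def DeltaC : Set V :=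
  {x | ∃ i : ZMod 5,
    x = eV + ee i + ee (i + 1) ∨ x = -(eV + ee i + ee (i + 1)) ∨
    x = ee i - ee (i - 2) - ee (i + 2) ∨ x = -(ee i - ee (i - 2) - ee (i + 2))}

lemma sum_zmod5 (f : ZMod 5 → ℚ) : ∑ i, f i = f 0 + f 1 + f 2 + f 3 + f 4 :=
  Fin.sum_univ_five f

/-- The pairing of `λb` with `e + e₀ + e₁`, for `b` running through the basis. -/
lemma sform_bvec (p q : ℚ) (j : J5) :
    sform ((p • (LinearMap.id : V →ₗ[ℚ] V) +
      q • ((2 : ℚ) • Xmap - (3 : ℚ) • (LinearMap.id : V →ₗ[ℚ] V))) (bvec j)) (eV + ee 0 + ee 1) =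
    if j = none ∨ j = some 0 ∨ j = some 1 then p else if j = some 3 then -q else q := by
  -- Only the coordinates `e, e₀, e₁` of `λb` enter the pairing.
  have hs (x : V) : sform x (eV + ee 0 + ee 1) = x none + x (some 0) + x (some 1) := by
    simp [sform, eV, ee, Fintype.sum_option, sum_zmod5, Pi.single_apply,
      show (0 : ZMod 5) ≠ 1 by decide, show (1 : ZMod 5) ≠ 0 by decide,
      show (2 : ZMod 5) ≠ 0 by decide, show (3 : ZMod 5) ≠ 0 by decide,
      show (4 : ZMod 5) ≠ 0 by decide, show (2 : ZMod 5) ≠ 1 by decide,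
      show (3 : ZMod 5) ≠ 1 by decide, show (4 : ZMod 5) ≠ 1 by decide, add_assoc]
  have h02 : (0 - 2 : ZMod 5) = 3 := by decide
  have h12 : (1 - 2 : ZMod 5) = 4 := by decide
  have h20 : (0 + 2 : ZMod 5) = 2 := by decide
  have h21 : (1 + 2 : ZMod 5) = 3 := by decide
  rw [hs]
  simp only [Xmap, LinearMap.add_apply, LinearMap.sub_apply, LinearMap.smul_apply,
    LinearMap.id_apply, LinearMap.coe_mk, AddHom.coe_mk, Pi.add_apply, Pi.sub_apply,
    Pi.smul_apply, smul_eq_mul, bvec, Finset.sum_pi_single', Finset.mem_univ, if_true,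
    h02, h12, h20, h21]
  obtain _ | k := j
  · simp
    ring
  · simp only [Pi.single_apply, Option.some.injEq, reduceCtorEq, false_or]
    have hk : k = 0 ∨ k = 1 ∨ k = 2 ∨ k = 3 ∨ k = 4 := by
      revert k
      decide
    obtain rfl | rfl | rfl | rfl | rfl := hk <;> simp +decide only [if_true, if_false] <;> ring

/-- Suppose `p, q ∈ ℤ` are not both zero and `λ = p·id + q·(2X − 3·id)` satisfies
`s(λx, y) ∈ {−1,0,1}` for all `x ∈ Δ_ir`, `y ∈ Δ_c`, and at most three of the six basis
vectors `b` satisfy `s(λb, e + e₀ + e₁) ≠ 0`. Then `(p,q) = (±1, 0)` or `(p,q) = (0, ±1)`,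
i.e. `λ = ±id` or `λ = ±(2X − 3·id)`. -/
theorem lambda_of_deltaIr_pairing (p q : ℤ) (hpq : ¬(p = 0 ∧ q = 0)) (lam : V →ₗ[ℚ] V)
    (hlam : lam = (p : ℚ) • (LinearMap.id : V →ₗ[ℚ] V) +
      (q : ℚ) • ((2 : ℚ) • Xmap - (3 : ℚ) • (LinearMap.id : V →ₗ[ℚ] V)))
    (hval : ∀ x ∈ DeltaIr, ∀ y ∈ DeltaC,
      sform (lam x) y = -1 ∨ sform (lam x) y = 0 ∨ sform (lam x) y = 1)
    (hcard : Set.ncard {j : J5 | sform (lam (bvec j)) (eV + ee 0 + ee 1) ≠ 0} ≤ 3) :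
    ((p = 1 ∨ p = -1) ∧ q = 0) ∨ (p = 0 ∧ (q = 1 ∨ q = -1)) := by
  subst hlam
  have hy : eV + ee 0 + ee 1 ∈ DeltaC := ⟨0, Or.inl (by rw [zero_add])⟩
  have hp := hval (bvec none) (Or.inl rfl) _ hy
  have hq := hval (bvec (some 2)) (Or.inr (Or.inr ⟨2, Or.inl rfl⟩)) _ hy
  rw [sform_bvec, if_pos (Or.inl rfl)] at hp
  rw [sform_bvec, if_neg (by decide), if_neg (by decide)] at hq
  norm_cast at hp hq
  have h0 : p = 0 ∨ q = 0 := by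
    by_contra! h
    have hu : {j : J5 | sform (((p : ℚ) • (LinearMap.id : V →ₗ[ℚ] V) +
        (q : ℚ) • ((2 : ℚ) • Xmap - (3 : ℚ) • (LinearMap.id : V →ₗ[ℚ] V))) (bvec j))
        (eV + ee 0 + ee 1) ≠ 0} = Set.univ := by
      refine Set.eq_univ_of_forall fun j => ?_
      rw [Set.mem_ofPred_eq, sform_bvec]
      split_ifs <;> simp [h.1, h.2]
    rw [hu, Set.ncard_univ, Nat.card_eq_fintype_card, Fintype.card_option, ZMod.card] at hcard
    omega
  omega
end

section
/- The ℚ-linear map X satisfies: (i) X∘X = X + id; (ii) X is self-adjoint with respect to s, i.e. s(Xa, b) = s(a, Xb) for all a, b ∈ V; (iii) X commutes with σ₅ and with σ₂ (hence with the whole icosahedral A₅-action they generate); (iv) X(ε) = ε + e. -/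
/-- Index rotation `some i ↦ some (i+1)`, `none ↦ none`. -/
def rotIdx : J5 ≃ J5 := Equiv.optionCongr (Equiv.addRight (1 : ZMod 5))

/-- `σ₅ : V ≃ V`, with `σ₅(e) = e` and `σ₅(eᵢ) = e_{i+1}`. -/
def s5 : V ≃ₗ[ℚ] V := LinearEquiv.funCongrLeft ℚ ℚ rotIdx.symm

/-- Index involution underlying `σ₂`. -/
def t2 : J5 → J5
  | none => some 0
  | some i => if i = 0 then none else if i = 1 then some 4 else if i = 4 then some 1 else some i

/-- Sign function underlying `σ₂`. -/
def sg2 : J5 → ℚ := fun j => if j = some 2 ∨ j = some 3 then -1 else 1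

/-- The function underlying `σ₂`. -/
def s2fun : V → V := fun x j => sg2 j * x (t2 j)

lemma t2_invol : ∀ j, t2 (t2 j) = j := by decide

lemma sg2_mul : ∀ j, sg2 j * sg2 (t2 j) = 1 := by
  intro j
  rcases j with _ | i
  · simp (config := { decide := true }) [sg2, t2]
  · fin_cases i <;> simp (config := { decide := true }) [sg2, t2]

lemma s2fun_invol : Function.Involutive s2fun := by
  intro x
  funext j
  show sg2 j * (sg2 (t2 j) * x (t2 (t2 j))) = x j
  rw [t2_invol, ← mul_assoc, sg2_mul, one_mul]

/-- `σ₂ : V ≃ V`, with `σ₂(e) = e₀`, `σ₂(e₀) = e`, `σ₂(e₁) = e₄`, `σ₂(e₄) = e₁`,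
`σ₂(e₂) = −e₂`, `σ₂(e₃) = −e₃`. -/
def s2 : V ≃ₗ[ℚ] V where
  toFun := s2fun
  invFun := s2fun
  left_inv := s2fun_invol
  right_inv := s2fun_invol
  map_add' x y := by funext j; simp [s2fun, mul_add]
  map_smul' c x := by funext j; simp [s2fun]; ring

lemma sum_J5 (f : J5 → ℚ) : ∑ t : J5, f t =
    f none + (f (some 0) + f (some 1) + f (some 2) + f (some 3) + f (some 4)) := by
  rw [Fintype.sum_option]
  congr 1
  exact Fin.sum_univ_five (fun i : Fin 5 => f (some i))

lemma ext_J5 {x y : V} (h : x none = y none) (h0 : x (some 0) = y (some 0))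
    (h1 : x (some 1) = y (some 1)) (h2 : x (some 2) = y (some 2))
    (h3 : x (some 3) = y (some 3)) (h4 : x (some 4) = y (some 4)) : x = y := by
  funext j
  rcases j with _ | i
  · exact h
  · fin_cases i <;> assumption

/-- The six coordinates of `X x`, with the indices `k ± 2` reduced mod 5. -/
lemma Xmap_coords (x : V) :
    Xmap x none = (∑ t : J5, x t) / 2 ∧
    Xmap x (some 0) = (∑ t : J5, x t) / 2 - x (some 3) - x (some 2) ∧
    Xmap x (some 1) = (∑ t : J5, x t) / 2 - x (some 4) - x (some 3) ∧
    Xmap x (some 2) = (∑ t : J5, x t) / 2 - x (some 0) - x (some 4) ∧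
    Xmap x (some 3) = (∑ t : J5, x t) / 2 - x (some 1) - x (some 0) ∧
    Xmap x (some 4) = (∑ t : J5, x t) / 2 - x (some 2) - x (some 1) := by
  have key : ∀ k : ZMod 5, Xmap x (some k) =
      (∑ t : J5, x t) / 2 - x (some (k - 2)) - x (some (k + 2)) := fun k => by
    change (∑ t : J5, x t) / 2 + (-(x (some (k - 2))) - x (some (k + 2))) = _
    ring
  exact ⟨add_zero _, key 0, key 1, key 2, key 3, key 4⟩

lemma s5_coords (x : V) :
    s5 x none = x none ∧ s5 x (some 0) = x (some 4) ∧ s5 x (some 1) = x (some 0) ∧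
    s5 x (some 2) = x (some 1) ∧ s5 x (some 3) = x (some 2) ∧ s5 x (some 4) = x (some 3) :=
  ⟨rfl, rfl, rfl, rfl, rfl, rfl⟩

lemma s2_coords (x : V) :
    s2 x none = x (some 0) ∧ s2 x (some 0) = x none ∧ s2 x (some 1) = x (some 4) ∧
    s2 x (some 2) = -x (some 2) ∧ s2 x (some 3) = -x (some 3) ∧
    s2 x (some 4) = x (some 1) := by
  have key : ∀ j, s2 x j = sg2 j * x (t2 j) := fun _ => rfl
  refine ⟨?_, ?_, ?_, ?_, ?_, ?_⟩ <;> rw [key] <;>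
    simp (config := { decide := true }) [sg2, t2]

lemma eV_none : eV none = 1 := rfl

lemma eV_some (i : ZMod 5) : eV (some i) = 0 := rfl

lemma eps_apply (j : J5) : eps j = 1 / 2 := by
  rcases j with _ | i
  · simp [eps, eV, ee]
  · simp [eps, eV, ee, Pi.single_apply]

/-- The linear map `X` satisfies `X² = X + id`, is self-adjoint with respect to `s`,
commutes with `σ₅` and `σ₂` (hence with the icosahedral `A₅`-action they generate), and
sends `ε` to `ε + e`. -/
theorem Xmap_properties :
    Xmap ∘ₗ Xmap = Xmap + LinearMap.id ∧
    (∀ a b : V, sform (Xmap a) b = sform a (Xmap b)) ∧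
    (∀ v : V, Xmap (s5 v) = s5 (Xmap v)) ∧
    (∀ v : V, Xmap (s2 v) = s2 (Xmap v)) ∧
    Xmap eps = eps + eV := by
  refine ⟨?_, fun a b => ?_, fun v => ?_, fun v => ?_, ?_⟩
  · refine LinearMap.ext fun v => ?_
    change Xmap (Xmap v) = Xmap v + v
    obtain ⟨h, h0, h1, h2, h3, h4⟩ := Xmap_coords v
    obtain ⟨k, k0, k1, k2, k3, k4⟩ := Xmap_coords (Xmap v)
    simp only [sum_J5] at *
    apply ext_J5 <;> simp only [Pi.add_apply, *] <;> ring
  · obtain ⟨h, h0, h1, h2, h3, h4⟩ := Xmap_coords a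
    obtain ⟨k, k0, k1, k2, k3, k4⟩ := Xmap_coords b
    simp only [sum_J5] at *
    simp only [sform, sum_J5, *]
    ring
  · obtain ⟨h, h0, h1, h2, h3, h4⟩ := Xmap_coords v
    obtain ⟨k, k0, k1, k2, k3, k4⟩ := Xmap_coords (s5 v)
    obtain ⟨l, l0, l1, l2, l3, l4⟩ := s5_coords v
    obtain ⟨m, m0, m1, m2, m3, m4⟩ := s5_coords (Xmap v)
    simp only [sum_J5] at *
    apply ext_J5 <;> simp only [*] <;> ring
  · obtain ⟨h, h0, h1, h2, h3, h4⟩ := Xmap_coords v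
    obtain ⟨k, k0, k1, k2, k3, k4⟩ := Xmap_coords (s2 v)
    obtain ⟨l, l0, l1, l2, l3, l4⟩ := s2_coords v
    obtain ⟨m, m0, m1, m2, m3, m4⟩ := s2_coords (Xmap v)
    simp only [sum_J5] at *
    apply ext_J5 <;> simp only [*] <;> ring
  · obtain ⟨h, h0, h1, h2, h3, h4⟩ := Xmap_coords eps
    apply ext_J5 <;> simp only [Pi.add_apply, eps_apply, eV_none, eV_some, sum_J5, *] <;> norm_num
end

section
/- Let E∨ := {v ∈ V : s(v, x) ∈ ℤ for all x ∈ E}. Then E ⊆ E₀ ⊆ E∨, E∨ = E₀ + ℤε, the quotient group E∨/E has order 4 with nonzero classes [e], [ε], [e+ε], the map X sends E into E and E∨ into E∨, and the induced map on E∨/E cyclically permutes the three nonzero classes: X[e] = [ε], X[ε] = [e+ε], X[e+ε] = [e]. -/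
/-- `E₀ ⊂ V`: the `ℤ`-span of the basis `{e, e₀, …, e₄}`. -/
def E0 : Submodule ℤ V := Submodule.span ℤ (Set.range bvec)

/-- `E ⊂ E₀`: the integral combinations of the basis with even coefficient sum. -/
def Eset : Set V := {x | x ∈ E0 ∧ ∃ m : ℤ, (∑ j : J5, x j) = 2 * m}

/-- `E∨ = {v ∈ V : s(v, x) ∈ ℤ for all x ∈ E}`. -/
def Edual : Set V := {v | ∀ x ∈ Eset, ∃ n : ℤ, sform v x = (n : ℚ)}

lemma mem_E0_iff (x : V) : x ∈ E0 ↔ ∃ n : J5 → ℤ, ∀ j, x j = n j := by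
  constructor
  · intro hx
    refine Submodule.span_induction (p := fun (x : V) _ => ∃ n : J5 → ℤ, ∀ j, x j = n j)
      ?_ ?_ ?_ ?_ hx
    · rintro _ ⟨i, rfl⟩
      refine ⟨Pi.single i 1, fun j => ?_⟩
      by_cases h : j = i
      · subst h; simp [bvec]
      · simp [bvec, h]
    · exact ⟨0, by simp⟩
    · rintro x y _ _ ⟨n, hn⟩ ⟨m, hm⟩
      exact ⟨n + m, fun j => by simp [hn, hm]⟩
    · rintro a x _ ⟨n, hn⟩
      exact ⟨a • n, fun j => by simp [hn]⟩
  · rintro ⟨n, hn⟩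
    have hx : x = ∑ j, n j • bvec j := by
      funext i
      simp only [Finset.sum_apply, Pi.smul_apply, bvec, hn, Pi.single_apply, smul_ite, smul_zero,
        Finset.sum_ite_eq, Finset.mem_univ, if_true]
      simp
    rw [hx]
    exact Submodule.sum_mem _ fun j _ =>
      Submodule.smul_mem _ _ (Submodule.subset_span ⟨j, rfl⟩)

lemma mem_Eset_iff (x : V) :
    x ∈ Eset ↔ ∃ n : J5 → ℤ, (∀ j, x j = n j) ∧ ∃ m : ℤ, ∑ j, n j = 2 * m := by
  constructor
  · rintro ⟨hx, m, hm⟩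
    obtain ⟨n, hn⟩ := (mem_E0_iff x).1 hx
    refine ⟨n, hn, m, ?_⟩
    simp only [hn] at hm
    exact_mod_cast hm
  · rintro ⟨n, hn, m, hm⟩
    refine ⟨(mem_E0_iff x).2 ⟨n, hn⟩, m, ?_⟩
    simp only [hn]
    exact_mod_cast hm

lemma eV_apply (j : J5) : eV j = ((if j = none then 1 else 0 : ℤ) : ℚ) := by
  simp [eV, Pi.single_apply]

lemma sum_eV : ∑ j : J5, (if j = none then 1 else 0 : ℤ) = 1 := by simp

lemma sform_single_sub (v : V) (a b : ℚ) (i k : J5) :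
    sform v (Pi.single i a - Pi.single k b) = v i * a - v k * b := by
  simp [sform, mul_sub, Pi.single_apply, -Fintype.sum_option]

/-- The elements of `E∨` are the vectors `n + cε` with `n` integral and `c ∈ ℤ`. -/
lemma mem_Edual_iff (v : V) :
    v ∈ Edual ↔ ∃ (n : J5 → ℤ) (c : ℤ), ∀ j, v j = n j + (c : ℚ) / 2 := by
  constructor
  · intro hv
    -- `c` is twice the `e`-coordinate of `v`, and `n j` is the pairing of `v` with `eⱼ - e`.
    have hc : ∃ c : ℤ, v none * 2 = c := by
      obtain ⟨c, hc⟩ := hv (Pi.single none 2 - Pi.single none 0) ((mem_Eset_iff _).2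
        ⟨Pi.single none 2, fun j => by by_cases h : j = none <;> simp [h],
          1, by simp⟩)
      rw [sform_single_sub] at hc
      exact ⟨c, by linarith⟩
    have hn : ∀ j, ∃ n : ℤ, v j - v none = n := by
      intro j
      obtain ⟨n, hn⟩ := hv (Pi.single j 1 - Pi.single none 1) ((mem_Eset_iff _).2
        ⟨Pi.single j 1 - Pi.single none 1,
          fun i => by simp [Pi.single_apply],
          0, by simp [Pi.single_apply, -Fintype.sum_option]⟩)
      rw [sform_single_sub] at hn
      exact ⟨n, by linarith⟩
    obtain ⟨c, hc⟩ := hc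
    choose n hn using hn
    exact ⟨n, c, fun j => by linarith [hn j]⟩
  · rintro ⟨n, c, hv⟩ x hx
    obtain ⟨k, hk, m, hm⟩ := (mem_Eset_iff x).1 hx
    refine ⟨∑ j, n j * k j + c * m, ?_⟩
    have hm' : ∑ j, (k j : ℚ) = 2 * m := by exact_mod_cast hm
    simp only [sform, hv, hk, add_mul, Finset.sum_add_distrib, ← Finset.mul_sum, hm']
    push_cast
    ring

lemma Xmap_none (x : V) : Xmap x none = (∑ t, x t) / 2 := by
  simp [Xmap]

lemma Xmap_some (x : V) (k : ZMod 5) :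
    Xmap x (some k) = (∑ t, x t) / 2 - x (some (k - 2)) - x (some (k + 2)) := by
  simp [Xmap]; ring

lemma sum_shift (n : ZMod 5 → ℤ) (a : ZMod 5) : ∑ k, n (k + a) = ∑ k, n k :=
  Equiv.sum_comp (Equiv.addRight a) n

lemma Xmap_mem_Eset (x : V) (hx : x ∈ Eset) : Xmap x ∈ Eset := by
  obtain ⟨n, hn, m, hm⟩ := (mem_Eset_iff x).1 hx
  have hS : ∑ t, x t = 2 * m := by
    simp only [hn]; exact_mod_cast hm
  refine (mem_Eset_iff _).2 ⟨fun j => m - j.elim 0 (fun k => n (some (k - 2)) + n (some (k + 2))),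
    ?_, m + n none, ?_⟩
  · rintro (_ | k)
    · rw [Xmap_none, hS]; simp
    · rw [Xmap_some, hS, hn, hn]; push_cast [Option.elim]; ring
  · have h1 := sum_shift (fun k => n (some k)) 2
    have h2 := sum_shift (fun k => n (some k)) (-2)
    simp only [← sub_eq_add_neg] at h2
    rw [Fintype.sum_option] at hm ⊢
    simp only [Option.elim, Finset.sum_sub_distrib, Finset.sum_add_distrib, h1, h2,
      Finset.sum_const, Finset.card_univ, ZMod.card]
    simp only [nsmul_eq_mul]
    push_cast
    linarith

lemma Xmap_eV : Xmap eV = eps := by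
  funext j
  rcases j with _ | k
  · rw [Xmap_none, eps_apply]; simp [eV]
  · rw [Xmap_some, eps_apply]; simp [eV]

lemma Xmap_eps : Xmap eps = eV + eps := by
  funext j
  rcases j with _ | k
  · rw [Xmap_none, Pi.add_apply]; simp only [eps_apply, eV_apply]; norm_num
  · rw [Xmap_some, Pi.add_apply]; simp only [eps_apply, eV_apply, reduceCtorEq]; norm_num

lemma Xmap_mem_Edual (v : V) (hv : v ∈ Edual) : Xmap v ∈ Edual := by
  obtain ⟨n, c, hn⟩ := (mem_Edual_iff v).1 hv
  -- The coordinate sum of `v` is `∑ n + 3c`, so every coordinate of `X v` lies in half of it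
  -- plus `ℤ`.
  have hS : ∑ t, v t = ((∑ t, n t + 3 * c : ℤ) : ℚ) := by
    simp only [hn, Finset.sum_add_distrib, Finset.sum_const, Finset.card_univ, Fintype.card_option,
      ZMod.card]
    push_cast
    ring
  refine (mem_Edual_iff _).2
    ⟨fun j => j.elim 0 (fun k => - n (some (k - 2)) - n (some (k + 2)) - c),
      ∑ t, n t + 3 * c, ?_⟩
  rintro (_ | k)
  · rw [Xmap_none, hS]; simp
  · rw [Xmap_some, hS, hn, hn]; push_cast [Option.elim]; ring

/-- A vector with a coordinate in `1/2 + ℤ` is not in `E`. -/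
lemma not_mem_Eset_of_half (x : V) (j : J5) (a : ℤ) (h : x j = a + 1 / 2) : x ∉ Eset := by
  intro hx
  obtain ⟨n, hn, -⟩ := (mem_Eset_iff x).1 hx
  have h2 : (2 * n j : ℚ) = 2 * a + 1 := by rw [← hn, h]; ring
  have h3 : 2 * n j = 2 * a + 1 := by exact_mod_cast h2
  omega

lemma Edual_classes (v : V) (hv : v ∈ Edual) :
    v ∈ Eset ∨ v - eV ∈ Eset ∨ v - eps ∈ Eset ∨ v - (eV + eps) ∈ Eset := by
  obtain ⟨n, c, hn⟩ := (mem_Edual_iff v).1 hv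
  simp only [mem_Eset_iff, Pi.sub_apply, Pi.add_apply, eps_apply, eV_apply, hn]
  have hconst (k : ℤ) : ∑ _j : J5, k = 6 * k := by
    simp only [Finset.sum_const, Finset.card_univ, Fintype.card_option, ZMod.card]
    simp
  obtain ⟨k, hk | hk⟩ := Int.even_or_odd' c <;>
    obtain ⟨m, hm | hm⟩ := Int.even_or_odd' (∑ j, n j) <;> subst hk
  · refine Or.inl ⟨fun j => n j + k, fun j => by push_cast; ring, m + 3 * k, ?_⟩
    rw [Finset.sum_add_distrib, hm, hconst]; ring
  · refine Or.inr (Or.inl ⟨fun j => n j + k - if j = none then 1 else 0,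
      fun j => by push_cast; ring, m + 3 * k, ?_⟩)
    rw [Finset.sum_sub_distrib, Finset.sum_add_distrib, hm, hconst, sum_eV]; ring
  · refine Or.inr (Or.inr (Or.inl ⟨fun j => n j + k, fun j => by push_cast; ring, m + 3 * k, ?_⟩))
    rw [Finset.sum_add_distrib, hm, hconst]; ring
  · refine Or.inr (Or.inr (Or.inr ⟨fun j => n j + k - if j = none then 1 else 0,
      fun j => by push_cast; ring, m + 3 * k, ?_⟩))
    rw [Finset.sum_sub_distrib, Finset.sum_add_distrib, hm, hconst, sum_eV]; ring

/-- `E ⊆ E₀ ⊆ E∨`; `E∨ = E₀ + ℤε`; the quotient `E∨/E` has order 4, with distinct nonzero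
classes `[e], [ε], [e+ε]`; `X` preserves `E` and `E∨`; and the induced action of `X` on
`E∨/E` cyclically permutes the three nonzero classes `[e] ↦ [ε] ↦ [e+ε] ↦ [e]`. -/
theorem Edual_structure :
    Eset ⊆ (E0 : Set V) ∧
    (E0 : Set V) ⊆ Edual ∧
    Edual = {v : V | ∃ x ∈ E0, ∃ n : ℤ, v = x + (n : ℚ) • eps} ∧
    (∀ v ∈ Edual, v ∈ Eset ∨ v - eV ∈ Eset ∨ v - eps ∈ Eset ∨ v - (eV + eps) ∈ Eset) ∧
    eV ∉ Eset ∧ eps ∉ Eset ∧ eV + eps ∉ Eset ∧ eps - eV ∉ Eset ∧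
    (∀ x ∈ Eset, Xmap x ∈ Eset) ∧
    (∀ v ∈ Edual, Xmap v ∈ Edual) ∧
    Xmap eV - eps ∈ Eset ∧ Xmap eps - (eV + eps) ∈ Eset ∧
    Xmap (eV + eps) - eV ∈ Eset := by
  have h0 : (0 : V) ∈ Eset := (mem_Eset_iff _).2 ⟨0, by simp, 0, by simp⟩
  refine ⟨fun x hx => hx.1, ?_, ?_, Edual_classes, ?_, ?_, ?_, ?_, Xmap_mem_Eset,
    Xmap_mem_Edual, ?_, ?_, ?_⟩
  · intro x hx
    obtain ⟨n, hn⟩ := (mem_E0_iff x).1 hx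
    exact (mem_Edual_iff x).2 ⟨n, 0, by simp [hn]⟩
  · ext v
    rw [mem_Edual_iff, Set.mem_ofPred_eq]
    constructor
    · rintro ⟨n, c, hv⟩
      refine ⟨fun j => n j, (mem_E0_iff _).2 ⟨n, fun _ => rfl⟩, c, ?_⟩
      funext j
      simp only [hv, Pi.add_apply, Pi.smul_apply, eps_apply, smul_eq_mul]
      ring
    · rintro ⟨x, hx, c, rfl⟩
      obtain ⟨n, hn⟩ := (mem_E0_iff x).1 hx
      refine ⟨n, c, fun j => ?_⟩
      simp only [hn, Pi.add_apply, Pi.smul_apply, eps_apply, smul_eq_mul]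
      ring
  · rintro ⟨-, m, hm⟩
    simp only [eV_apply] at hm
    have hm' : ∑ j : J5, (if j = none then 1 else 0 : ℤ) = 2 * m := by exact_mod_cast hm
    rw [sum_eV] at hm'
    omega
  · exact not_mem_Eset_of_half _ none 0 (by simp [eps_apply])
  · exact not_mem_Eset_of_half _ none 1 (by simp [eps_apply, eV])
  · exact not_mem_Eset_of_half _ none (-1) (by simp [eps_apply, eV]; norm_num)
  · rw [Xmap_eV, sub_self]; exact h0
  · rw [Xmap_eps, sub_self]; exact h0
  · -- `X (e + ε) - e = 2ε` is the all-ones vector.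
    rw [map_add, Xmap_eV, Xmap_eps]
    refine (mem_Eset_iff _).2 ⟨fun _ => 1, fun j => ?_, 3, by simp⟩
    simp only [Pi.sub_apply, Pi.add_apply, eps_apply, Int.cast_one]
    ring
end

section
/- Let G be the subgroup of GL(V) generated by σ₅ and σ₂. Then: (i) the orbit {g(e) : g ∈ G} equals Δ_ir := {±e, ±e₀, …, ±e₄}, and its ℤ-span equals E₀; (ii) the orbit {g(e + e₀ + e₁) : g ∈ G} equals Δ_c := {±(e + eᵢ + e_{i+1}) : i ∈ ℤ/5} ∪ {±(eᵢ − e_{i−2} − e_{i+2}) : i ∈ ℤ/5}, and its ℤ-span also equals E₀. -/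
/-- The icosahedral group `G = ⟨σ₅, σ₂⟩ ≅ A₅` inside `GL(V)`. -/
def Gico : Subgroup (V ≃ₗ[ℚ] V) := Subgroup.closure {s5, s2}

/-! ### Action of the generators on the basis -/

lemma s5_eV : s5 eV = eV := by
  funext j; revert j; decide +kernel

lemma s5_ee (i : ZMod 5) : s5 (ee i) = ee (i + 1) := by
  funext j; revert i j; decide +kernel

lemma s2_eV : s2 eV = ee 0 := by
  funext j; revert j; decide +kernel

lemma s2_ee0 : s2 (ee 0) = eV := by
  funext j; revert j; decide +kernel

lemma s2_ee1 : s2 (ee 1) = ee 4 := by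
  funext j; revert j; decide +kernel

lemma s2_ee2 : s2 (ee 2) = -ee 2 := by
  funext j; revert j; decide +kernel

lemma s2_ee3 : s2 (ee 3) = -ee 3 := by
  funext j; revert j; decide +kernel

lemma s2_ee4 : s2 (ee 4) = ee 1 := by
  funext j; revert j; decide +kernel

lemma s2_s2 (x : V) : s2 (s2 x) = x := s2fun_invol x

lemma s5_pow_five (x : V) : s5 (s5 (s5 (s5 (s5 x)))) = x := by
  have h : ∀ j, rotIdx.symm (rotIdx.symm (rotIdx.symm (rotIdx.symm (rotIdx.symm j)))) = j := by
    decide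
  funext j
  exact congrArg x (h j)

/-! ### Orbits under `G` -/

lemma zmod5_induction {P : ZMod 5 → Prop} (k : ZMod 5) (hk : P k)
    (h : ∀ i, P i → P (i + 1)) (i : ZMod 5) : P i := by
  have key : ∀ n : ℕ, P (k + n) := by
    intro n
    induction n with
    | zero => simpa using hk
    | succ n ih => simpa [add_assoc] using h _ ih
  have := key (i - k).val
  rwa [ZMod.natCast_zmod_val, add_sub_cancel] at this

/-- A set stable under the two generators contains the `G`-orbit of each of its elements. -/
lemma orbit_subset {S : Set V} (h5 : ∀ x ∈ S, s5 x ∈ S) (h2 : ∀ x ∈ S, s2 x ∈ S)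
    {v : V} (hv : v ∈ S) : {x : V | ∃ g ∈ Gico, g v = x} ⊆ S := by
  rintro _ ⟨g, hg, rfl⟩
  have key : ∀ x, g x ∈ S ↔ x ∈ S := by
    induction hg using Subgroup.closure_induction with
    | mem g hg =>
      intro x
      rcases hg with rfl | rfl
      · refine ⟨fun h => ?_, h5 x⟩
        have := h5 _ (h5 _ (h5 _ (h5 _ h)))
        rwa [s5_pow_five] at this
      · refine ⟨fun h => ?_, h2 x⟩
        have := h2 _ h
        rwa [s2_s2] at this
    | one => intro x; rfl
    | mul a b _ _ ha hb => intro x; exact (ha (b x)).trans (hb x)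
    | inv a _ ha =>
      intro x
      have h : a (a⁻¹ x) = x := a.apply_symm_apply x
      rw [← ha (a⁻¹ x), h]
  exact (key v).2 hv

lemma orbit_s5 {v x : V} (h : ∃ g ∈ Gico, g v = x) : ∃ g ∈ Gico, g v = s5 x := by
  obtain ⟨g, hg, rfl⟩ := h
  exact ⟨s5 * g, mul_mem (Subgroup.subset_closure (Or.inl rfl)) hg, rfl⟩

lemma orbit_s2 {v x : V} (h : ∃ g ∈ Gico, g v = x) : ∃ g ∈ Gico, g v = s2 x := by
  obtain ⟨g, hg, rfl⟩ := h
  exact ⟨s2 * g, mul_mem (Subgroup.subset_closure (Or.inr rfl)) hg, rfl⟩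

/-! ### The orbit of `e` -/

lemma orbit_eV : {x : V | ∃ g ∈ Gico, g eV = x} = DeltaIr := by
  apply Set.Subset.antisymm
  · refine orbit_subset ?_ ?_ (Or.inl rfl)
    · rintro x (rfl | rfl | ⟨i, rfl | rfl⟩)
      · exact Or.inl s5_eV
      · exact Or.inr (Or.inl (by rw [map_neg, s5_eV]))
      · exact Or.inr (Or.inr ⟨i + 1, Or.inl (s5_ee i)⟩)
      · exact Or.inr (Or.inr ⟨i + 1, Or.inr (by rw [map_neg, s5_ee])⟩)
    · have hee : ∀ i : ZMod 5, s2 (ee i) ∈ DeltaIr ∧ s2 (-ee i) ∈ DeltaIr := by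
        intro i
        simp only [map_neg]
        obtain rfl | rfl | rfl | rfl | rfl : i = 0 ∨ i = 1 ∨ i = 2 ∨ i = 3 ∨ i = 4 := by
          revert i; decide
        · rw [s2_ee0]; exact ⟨Or.inl rfl, Or.inr (Or.inl rfl)⟩
        · rw [s2_ee1]; exact ⟨Or.inr (Or.inr ⟨4, Or.inl rfl⟩), Or.inr (Or.inr ⟨4, Or.inr rfl⟩)⟩
        · rw [s2_ee2, neg_neg]
          exact ⟨Or.inr (Or.inr ⟨2, Or.inr rfl⟩), Or.inr (Or.inr ⟨2, Or.inl rfl⟩)⟩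
        · rw [s2_ee3, neg_neg]
          exact ⟨Or.inr (Or.inr ⟨3, Or.inr rfl⟩), Or.inr (Or.inr ⟨3, Or.inl rfl⟩)⟩
        · rw [s2_ee4]; exact ⟨Or.inr (Or.inr ⟨1, Or.inl rfl⟩), Or.inr (Or.inr ⟨1, Or.inr rfl⟩)⟩
      rintro x (rfl | rfl | ⟨i, rfl | rfl⟩)
      · exact Or.inr (Or.inr ⟨0, Or.inl s2_eV⟩)
      · exact Or.inr (Or.inr ⟨0, Or.inr (by rw [map_neg, s2_eV])⟩)
      · exact (hee i).1
      · exact (hee i).2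
  · have h0 : ∃ g ∈ Gico, g eV = eV := ⟨1, one_mem _, rfl⟩
    have hp : ∀ i, ∃ g ∈ Gico, g eV = ee i :=
      zmod5_induction 0 (by simpa only [s2_eV] using orbit_s2 h0)
        (fun i hi => by simpa only [s5_ee] using orbit_s5 hi)
    have hn : ∀ i, ∃ g ∈ Gico, g eV = -ee i :=
      zmod5_induction 2 (by simpa only [s2_ee2] using orbit_s2 (hp 2))
        (fun i hi => by simpa only [map_neg, s5_ee] using orbit_s5 hi)
    rintro x (rfl | rfl | ⟨i, rfl | rfl⟩)
    · exact h0
    · have := orbit_s2 (hn 0)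
      rwa [map_neg, s2_ee0] at this
    · exact hp i
    · exact hn i

/-! ### The orbit of `e + e₀ + e₁` -/

/-- The vector `aᵢ = e + eᵢ + eᵢ₊₁`. -/
def aV (i : ZMod 5) : V := eV + ee i + ee (i + 1)

/-- The vector `bᵢ = eᵢ - eᵢ₋₂ - eᵢ₊₂`. -/
def bV (i : ZMod 5) : V := ee i - ee (i - 2) - ee (i + 2)

lemma s5_aV (i : ZMod 5) : s5 (aV i) = aV (i + 1) := by
  simp only [aV, map_add, s5_eV, s5_ee]

lemma s5_bV (i : ZMod 5) : s5 (bV i) = bV (i + 1) := by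
  simp only [bV, map_sub, s5_ee, add_right_comm, sub_add_eq_add_sub]

lemma s2_aV0 : s2 (aV 0) = aV 4 := by
  funext j; revert j; decide +kernel

lemma s2_aV1 : s2 (aV 1) = -bV 2 := by
  funext j; revert j; decide +kernel

lemma s2_aV2 : s2 (aV 2) = bV 0 := by
  funext j; revert j; decide +kernel

lemma s2_aV3 : s2 (aV 3) = -bV 3 := by
  funext j; revert j; decide +kernel

lemma s2_bV1 : s2 (bV 1) = -bV 1 := by
  funext j; revert j; decide +kernel

lemma s2_bV4 : s2 (bV 4) = -bV 4 := by
  funext j; revert j; decide +kernel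

lemma mem_DeltaC {x : V} :
    x ∈ DeltaC ↔ ∃ i, x = aV i ∨ x = -aV i ∨ x = bV i ∨ x = -bV i := Iff.rfl

lemma neg_mem_DeltaC {x : V} (h : x ∈ DeltaC) : -x ∈ DeltaC := by
  rw [mem_DeltaC] at h ⊢
  obtain ⟨i, rfl | rfl | rfl | rfl⟩ := h <;> exact ⟨i, by simp⟩

lemma s2_mem_DeltaC (i : ZMod 5) : s2 (aV i) ∈ DeltaC ∧ s2 (bV i) ∈ DeltaC := by
  have ha : ∀ i, aV i ∈ DeltaC := fun i => ⟨i, Or.inl rfl⟩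
  have hb : ∀ i, bV i ∈ DeltaC := fun i => ⟨i, Or.inr (Or.inr (Or.inl rfl))⟩
  have hnb := fun i => neg_mem_DeltaC (hb i)
  have hna := fun i => neg_mem_DeltaC (ha i)
  -- The remaining values of `σ₂` on the `aᵢ` and `bᵢ` follow from those above, as `σ₂² = 1`.
  have h4 : s2 (aV 4) = aV 0 := by rw [← s2_aV0, s2_s2]
  have h0 : s2 (bV 0) = aV 2 := by rw [← s2_aV2, s2_s2]
  have h2 : s2 (bV 2) = -aV 1 := by rw [← s2_s2 (aV 1), s2_aV1, map_neg, neg_neg]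
  have h3 : s2 (bV 3) = -aV 3 := by rw [← s2_s2 (aV 3), s2_aV3, map_neg, neg_neg]
  obtain rfl | rfl | rfl | rfl | rfl : i = 0 ∨ i = 1 ∨ i = 2 ∨ i = 3 ∨ i = 4 := by
    revert i; decide
  · rw [s2_aV0, h0]; exact ⟨ha _, ha _⟩
  · rw [s2_aV1, s2_bV1]; exact ⟨hnb _, hnb _⟩
  · rw [s2_aV2, h2]; exact ⟨hb _, hna _⟩
  · rw [s2_aV3, h3]; exact ⟨hnb _, hna _⟩
  · rw [h4, s2_bV4]; exact ⟨ha _, hnb _⟩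

lemma orbit_aV0 : {x : V | ∃ g ∈ Gico, g (aV 0) = x} = DeltaC := by
  apply Set.Subset.antisymm
  · refine orbit_subset ?_ ?_ ⟨0, Or.inl rfl⟩
    · rintro x ⟨i, hx⟩
      change x = aV i ∨ x = -aV i ∨ x = bV i ∨ x = -bV i at hx
      rw [mem_DeltaC]
      rcases hx with rfl | rfl | rfl | rfl <;> exact ⟨i + 1, by simp [s5_aV, s5_bV]⟩
    · rintro x ⟨i, hx⟩
      change x = aV i ∨ x = -aV i ∨ x = bV i ∨ x = -bV i at hx
      rcases hx with rfl | rfl | rfl | rfl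
      · exact (s2_mem_DeltaC i).1
      · rw [map_neg]; exact neg_mem_DeltaC (s2_mem_DeltaC i).1
      · exact (s2_mem_DeltaC i).2
      · rw [map_neg]; exact neg_mem_DeltaC (s2_mem_DeltaC i).2
  · have ha : ∀ i, ∃ g ∈ Gico, g (aV 0) = aV i :=
      zmod5_induction 0 ⟨1, one_mem _, rfl⟩
        (fun i hi => by simpa only [s5_aV] using orbit_s5 hi)
    have hb : ∀ i, ∃ g ∈ Gico, g (aV 0) = bV i :=
      zmod5_induction 0 (by simpa only [s2_aV2] using orbit_s2 (ha 2))
        (fun i hi => by simpa only [s5_bV] using orbit_s5 hi)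
    have hnb : ∀ i, ∃ g ∈ Gico, g (aV 0) = -bV i :=
      zmod5_induction 1 (by simpa only [s2_bV1] using orbit_s2 (hb 1))
        (fun i hi => by simpa only [map_neg, s5_bV] using orbit_s5 hi)
    have hna : ∀ i, ∃ g ∈ Gico, g (aV 0) = -aV i :=
      zmod5_induction 2
        (by simpa only [map_neg, ← s2_aV2, s2_s2] using orbit_s2 (hnb 0))
        (fun i hi => by simpa only [map_neg, s5_aV] using orbit_s5 hi)
    rintro x ⟨i, rfl | rfl | rfl | rfl⟩
    exacts [ha i, hna i, hb i, hnb i]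

/-! ### Integral spans -/

lemma eV_mem_E0 : eV ∈ E0 := Submodule.subset_span ⟨none, rfl⟩

lemma ee_mem_E0 (i : ZMod 5) : ee i ∈ E0 := Submodule.subset_span ⟨some i, rfl⟩

lemma E0_le {M : Submodule ℤ V} (h : eV ∈ M) (h' : ∀ i, ee i ∈ M) : E0 ≤ M := by
  refine Submodule.span_le.2 ?_
  rintro _ ⟨_ | i, rfl⟩
  exacts [h, h' i]

lemma span_DeltaIr : Submodule.span ℤ DeltaIr = E0 := by
  apply le_antisymm
  · refine Submodule.span_le.2 ?_
    rintro x (rfl | rfl | ⟨i, rfl | rfl⟩)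
    exacts [eV_mem_E0, neg_mem eV_mem_E0, ee_mem_E0 i, neg_mem (ee_mem_E0 i)]
  · exact E0_le (Submodule.subset_span (Or.inl rfl))
      fun i => Submodule.subset_span (Or.inr (Or.inr ⟨i, Or.inl rfl⟩))

lemma span_DeltaC : Submodule.span ℤ DeltaC = E0 := by
  apply le_antisymm
  · have ha : ∀ i, aV i ∈ E0 := fun i =>
      add_mem (add_mem eV_mem_E0 (ee_mem_E0 _)) (ee_mem_E0 _)
    have hb : ∀ i, bV i ∈ E0 := fun i =>
      sub_mem (sub_mem (ee_mem_E0 _) (ee_mem_E0 _)) (ee_mem_E0 _)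
    refine Submodule.span_le.2 ?_
    rintro x ⟨i, rfl | rfl | rfl | rfl⟩
    exacts [ha i, neg_mem (ha i), hb i, neg_mem (hb i)]
  · have ha : ∀ i, aV i ∈ Submodule.span ℤ DeltaC := fun i =>
      Submodule.subset_span ⟨i, Or.inl rfl⟩
    have hb : ∀ i, bV i ∈ Submodule.span ℤ DeltaC := fun i =>
      Submodule.subset_span ⟨i, Or.inr (Or.inr (Or.inl rfl))⟩
    have hsum : ∀ i, eV + ee i ∈ Submodule.span ℤ DeltaC := by
      intro i
      have h := add_mem (ha (i + 2)) (hb i)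
      have hi : i + 2 + 1 = i - 2 := by clear h; revert i; decide
      have heq : aV (i + 2) + bV i = eV + ee i := by
        rw [aV, bV, hi]; abel
      rwa [heq] at h
    have hee : ∀ i, ee i ∈ Submodule.span ℤ DeltaC := by
      intro i
      have h := sub_mem (ha (i - 1)) (hsum (i - 1))
      rwa [aV, add_sub_cancel_left, sub_add_cancel] at h
    refine E0_le ?_ hee
    have h := sub_mem (hsum 0) (hee 0)
    rwa [add_sub_cancel_right] at h

/-- The `G`-orbit of `e` is `Δ_ir = {±e, ±e₀, …, ±e₄}` and spans `E₀` over `ℤ`; the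
`G`-orbit of `e + e₀ + e₁` is `Δ_c` and also spans `E₀` over `ℤ`. -/
theorem orbits_of_e_and_eee :
    {x : V | ∃ g ∈ Gico, g eV = x} = DeltaIr ∧
    Submodule.span ℤ {x : V | ∃ g ∈ Gico, g eV = x} = E0 ∧
    {x : V | ∃ g ∈ Gico, g (eV + ee 0 + ee 1) = x} = DeltaC ∧
    Submodule.span ℤ {x : V | ∃ g ∈ Gico, g (eV + ee 0 + ee 1) = x} = E0 := by
  have h0 : eV + ee 0 + ee 1 = aV 0 := by rw [aV, zero_add]
  rw [h0, orbit_eV, orbit_aV0]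
  exact ⟨rfl, span_DeltaIr, rfl, span_DeltaC⟩
end

section
/- Let G be the subgroup of GL(V) generated by σ₅ and σ₂. The orbit {g(e + e₀) : g ∈ G} equals Δ_∞ := {±(e + eᵢ) : i ∈ ℤ/5} ∪ {±(eᵢ + e_{i+1}) : i ∈ ℤ/5} ∪ {±(e_{i−1} − e_{i+1}) : i ∈ ℤ/5}, a set of 15 antipodal pairs, and its ℤ-span equals E (the sublattice of E₀ of integer combinations with even coefficient sum). -/
/-- `Δ_∞ = {±(e + eᵢ)} ∪ {±(eᵢ + e_{i+1})} ∪ {±(e_{i−1} − e_{i+1})}`, `i ∈ ℤ/5`. -/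
def DeltaInf : Set V :=
  {x | ∃ i : ZMod 5,
    x = eV + ee i ∨ x = -(eV + ee i) ∨
    x = ee i + ee (i + 1) ∨ x = -(ee i + ee (i + 1)) ∨
    x = ee (i - 1) - ee (i + 1) ∨ x = -(ee (i - 1) - ee (i + 1))}

/-- The vectors of `Δ_∞`, arranged in six families that are each indexed by `ℤ/5`. -/
def deltaVec (k : Fin 6) (i : ZMod 5) : V :=
  match k with
  | 0 => eV + ee i
  | 1 => -(eV + ee i)
  | 2 => ee i + ee (i + 1)
  | 3 => -(ee i + ee (i + 1))
  | 4 => ee (i - 1) - ee (i + 1)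
  | 5 => -(ee (i - 1) - ee (i + 1))

lemma mem_DeltaInf_iff (x : V) : x ∈ DeltaInf ↔ ∃ k i, x = deltaVec k i := by
  constructor
  · rintro ⟨i, h | h | h | h | h | h⟩
    exacts [⟨0, i, h⟩, ⟨1, i, h⟩, ⟨2, i, h⟩, ⟨3, i, h⟩, ⟨4, i, h⟩, ⟨5, i, h⟩]
  · rintro ⟨k, i, rfl⟩
    refine ⟨i, ?_⟩
    fin_cases k <;> simp [deltaVec]

lemma deltaVec_mem (k : Fin 6) (i : ZMod 5) : deltaVec k i ∈ DeltaInf :=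
  (mem_DeltaInf_iff _).2 ⟨k, i, rfl⟩

lemma s5_deltaVec : ∀ k i, s5 (deltaVec k i) = deltaVec k (i + 1) := by
  decide +kernel

lemma s2_deltaVec : ∀ k i, ∃ k' i', s2 (deltaVec k i) = deltaVec k' i' := by
  decide +kernel

lemma deltaVec_injective : ∀ p q : Fin 6 × ZMod 5,
    deltaVec p.1 p.2 = deltaVec q.1 q.2 → p = q := by
  decide +kernel

lemma DeltaInf_eq_range :
    DeltaInf = Set.range (fun p : Fin 6 × ZMod 5 => deltaVec p.1 p.2) := by
  ext x
  rw [mem_DeltaInf_iff]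
  constructor
  · rintro ⟨k, i, rfl⟩
    exact ⟨(k, i), rfl⟩
  · rintro ⟨⟨k, i⟩, rfl⟩
    exact ⟨k, i, rfl⟩

lemma ncard_DeltaInf : Set.ncard DeltaInf = 30 := by
  rw [DeltaInf_eq_range, ← Set.image_univ,
    Set.ncard_image_of_injective _ (fun p q h => deltaVec_injective p q h), Set.ncard_univ,
    Nat.card_eq_fintype_card]
  simp [ZMod.card]

lemma neg_mem_DeltaInf (x : V) (hx : x ∈ DeltaInf) : -x ∈ DeltaInf := by
  obtain ⟨i, h⟩ := hx
  refine ⟨i, ?_⟩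
  rcases h with rfl | rfl | rfl | rfl | rfl | rfl <;> simp

/-- An injective self-map of a finite set is onto, so the inverse of an element stabilizing `Δ_∞`
stabilizes it as well. -/
lemma symm_mem_DeltaInf (g : V ≃ₗ[ℚ] V) (hg : ∀ x ∈ DeltaInf, g x ∈ DeltaInf) :
    ∀ x ∈ DeltaInf, g.symm x ∈ DeltaInf := by
  have hfin : DeltaInf.Finite := Set.finite_of_ncard_ne_zero (by rw [ncard_DeltaInf]; norm_num)
  have himg : Set.image g DeltaInf = DeltaInf :=
    Set.eq_of_subset_of_ncard_le (Set.image_subset_iff.2 hg)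
      (Set.ncard_image_of_injective _ g.injective).ge hfin
  intro x hx
  rw [← himg] at hx
  obtain ⟨y, hy, rfl⟩ := hx
  simpa using hy

lemma Gico_mem_DeltaInf (g : V ≃ₗ[ℚ] V) (hg : g ∈ Gico) :
    ∀ x ∈ DeltaInf, g x ∈ DeltaInf := by
  induction hg using Subgroup.closure_induction with
  | mem g hg =>
    intro x hx
    obtain ⟨k, i, rfl⟩ := (mem_DeltaInf_iff x).1 hx
    rcases hg with rfl | rfl
    · rw [s5_deltaVec]
      exact deltaVec_mem _ _
    · obtain ⟨k', i', h⟩ := s2_deltaVec k i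
      rw [h]
      exact deltaVec_mem _ _
  | one => exact fun x hx => hx
  | mul g h _ _ ihg ihh => exact fun x hx => ihg _ (ihh x hx)
  | inv g _ ih => exact symm_mem_DeltaInf g ih

lemma orbit_eq_DeltaInf : {x : V | ∃ g ∈ Gico, g (eV + ee 0) = x} = DeltaInf := by
  apply Set.Subset.antisymm
  · rintro x ⟨g, hg, rfl⟩
    exact Gico_mem_DeltaInf g hg _ (deltaVec_mem 0 0)
  set O : Set V := {x : V | ∃ g ∈ Gico, g (eV + ee 0) = x}
  have step : ∀ s ∈ Gico, ∀ x ∈ O, s x ∈ O := by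
    rintro s hs x ⟨g, hg, rfl⟩
    exact ⟨s * g, mul_mem hs hg, rfl⟩
  have h5 : ∀ x ∈ O, s5 x ∈ O := step s5 (Subgroup.subset_closure (by simp))
  have h2 : ∀ x ∈ O, s2 x ∈ O := step s2 (Subgroup.subset_closure (by simp))
  have family : ∀ k i, deltaVec k i ∈ O → ∀ j, deltaVec k j ∈ O := by
    intro k i hi j
    have hn : ∀ n : ℕ, deltaVec k (i + n) ∈ O := by
      intro n
      induction n with
      | zero => simpa using hi
      | succ n ih =>
        have := h5 _ ih
        rw [s5_deltaVec] at this
        simpa [add_assoc] using this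
    simpa using hn (j - i).val
  have link : ∀ k i k' i', s2 (deltaVec k i) = deltaVec k' i' → (∀ j, deltaVec k j ∈ O) →
      ∀ j, deltaVec k' j ∈ O := by
    intro k i k' i' h hk
    exact family k' i' (h ▸ h2 _ (hk i))
  have f0 : ∀ j, deltaVec 0 j ∈ O := family 0 0 ⟨1, one_mem _, rfl⟩
  have f2 := link 0 1 2 4 (by decide +kernel) f0
  have f4 := link 0 2 4 1 (by decide +kernel) f0
  have f3 := link 2 2 3 2 (by decide +kernel) f2
  have f5 := link 4 0 5 0 (by decide +kernel) f4
  have f1 := link 3 0 1 4 (by decide +kernel) f3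
  intro x hx
  obtain ⟨k, i, rfl⟩ := (mem_DeltaInf_iff x).1 hx
  fin_cases k
  exacts [f0 i, f1 i, f2 i, f3 i, f4 i, f5 i]

/-- The lattice `E` as a `ℤ`-submodule of `V`. -/
def ELattice : Submodule ℤ V where
  carrier := Eset
  zero_mem' := ⟨zero_mem _, 0, by simp⟩
  add_mem' := by
    rintro x y ⟨hx, m, hm⟩ ⟨hy, n, hn⟩
    refine ⟨add_mem hx hy, m + n, ?_⟩
    simp only [Pi.add_apply, Finset.sum_add_distrib, hm, hn]
    push_cast
    ring
  smul_mem' := by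
    rintro c x ⟨hx, m, hm⟩
    refine ⟨Submodule.smul_mem _ c hx, c * m, ?_⟩
    simp only [Pi.smul_apply, zsmul_eq_mul, ← Finset.mul_sum, hm]
    push_cast
    ring

lemma sum_bvec (j : J5) : ∑ l : J5, bvec j l = 1 := by
  simp [bvec]

lemma sum_eV_s11 : ∑ l : J5, eV l = 1 := sum_bvec none

lemma sum_ee (i : ZMod 5) : ∑ l : J5, ee i l = 1 := sum_bvec (some i)

lemma DeltaInf_subset_Eset : DeltaInf ⊆ (ELattice : Set V) := by
  have h0 : ∀ i, eV + ee i ∈ ELattice := fun i =>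
    ⟨add_mem eV_mem_E0 (ee_mem_E0 i), 1, by
      simp only [Pi.add_apply, Finset.sum_add_distrib, sum_eV_s11, sum_ee]; norm_num⟩
  have h2 : ∀ i j, ee i + ee j ∈ ELattice := fun i j =>
    ⟨add_mem (ee_mem_E0 i) (ee_mem_E0 j), 1, by
      simp only [Pi.add_apply, Finset.sum_add_distrib, sum_ee]; norm_num⟩
  have h4 : ∀ i j, ee i - ee j ∈ ELattice := fun i j =>
    ⟨sub_mem (ee_mem_E0 i) (ee_mem_E0 j), 0, by
      simp only [Pi.sub_apply, Finset.sum_sub_distrib, sum_ee]; norm_num⟩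
  rintro x ⟨i, rfl | rfl | rfl | rfl | rfl | rfl⟩
  exacts [h0 i, neg_mem (h0 i), h2 _ _, neg_mem (h2 _ _), h4 _ _, neg_mem (h4 _ _)]

lemma two_eV_mem_span : (2 : ℤ) • eV ∈ Submodule.span ℤ DeltaInf := by
  have h : (2 : ℤ) • eV = deltaVec 0 0 + deltaVec 0 1 - deltaVec 2 0 := by
    simp only [deltaVec, zero_add]
    module
  rw [h]
  exact sub_mem (add_mem (Submodule.subset_span (deltaVec_mem _ _))
    (Submodule.subset_span (deltaVec_mem _ _))) (Submodule.subset_span (deltaVec_mem _ _))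

lemma bvec_sub_eV_mem_span (j : J5) : bvec j - eV ∈ Submodule.span ℤ DeltaInf := by
  rcases j with _ | i
  · have h : bvec none - eV = 0 := sub_self _
    rw [h]
    exact zero_mem _
  · have h : bvec (some i) - eV = deltaVec 2 i - deltaVec 0 (i + 1) := by
      change ee i - eV = (ee i + ee (i + 1)) - (eV + ee (i + 1))
      abel
    rw [h]
    exact sub_mem (Submodule.subset_span (deltaVec_mem _ _))
      (Submodule.subset_span (deltaVec_mem _ _))

/-- Modulo `ℤ Δ_∞`, an integral vector is its coefficient sum times `e`. -/
lemma exists_sub_zsmul_eV_mem_span (x : V) (hx : x ∈ E0) :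
    ∃ n : ℤ, (∑ j : J5, x j) = n ∧ x - n • eV ∈ Submodule.span ℤ DeltaInf := by
  induction hx using Submodule.span_induction with
  | mem x hx =>
    obtain ⟨j, rfl⟩ := hx
    exact ⟨1, by rw [sum_bvec]; norm_num, by simpa using bvec_sub_eV_mem_span j⟩
  | zero => exact ⟨0, by simp, by simp⟩
  | add x y _ _ ihx ihy =>
    obtain ⟨m, hm, hm'⟩ := ihx
    obtain ⟨n, hn, hn'⟩ := ihy
    refine ⟨m + n, ?_, ?_⟩
    · simp only [Pi.add_apply, Finset.sum_add_distrib, hm, hn]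
      push_cast
      ring
    · have h : x + y - (m + n) • eV = (x - m • eV) + (y - n • eV) := by module
      rw [h]
      exact add_mem hm' hn'
  | smul c x _ ih =>
    obtain ⟨m, hm, hm'⟩ := ih
    refine ⟨c * m, ?_, ?_⟩
    · simp only [Pi.smul_apply, zsmul_eq_mul, ← Finset.mul_sum, hm]
      push_cast
      ring
    · have h : c • x - (c * m) • eV = c • (x - m • eV) := by module
      rw [h]
      exact Submodule.smul_mem _ c hm'

lemma span_DeltaInf : (Submodule.span ℤ DeltaInf : Set V) = Eset := by
  apply Set.Subset.antisymm
  · exact Submodule.span_le (p := ELattice).2 DeltaInf_subset_Eset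
  · rintro x ⟨hx, m, hm⟩
    obtain ⟨n, hn, hmem⟩ := exists_sub_zsmul_eV_mem_span x hx
    have hnm : n = 2 * m := by
      rw [hn] at hm
      exact_mod_cast hm
    have h : x = (x - n • eV) + m • ((2 : ℤ) • eV) := by
      rw [hnm]
      module
    rw [h]
    exact add_mem hmem (Submodule.smul_mem _ m two_eV_mem_span)

/-- The `G`-orbit of `e + e₀` equals `Δ_∞`, a set of 15 antipodal pairs (30 elements,
closed under negation), and its `ℤ`-span equals `E`, the sublattice of `E₀` of integer
combinations with even coefficient sum. -/
theorem orbit_of_e_plus_e0 :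
    {x : V | ∃ g ∈ Gico, g (eV + ee 0) = x} = DeltaInf ∧
    Set.ncard DeltaInf = 30 ∧
    (∀ x ∈ DeltaInf, -x ∈ DeltaInf) ∧
    (Submodule.span ℤ {x : V | ∃ g ∈ Gico, g (eV + ee 0) = x} : Set V) = Eset := by
  refine ⟨orbit_eq_DeltaInf, ncard_DeltaInf, neg_mem_DeltaInf, ?_⟩
  rw [orbit_eq_DeltaInf]
  exact span_DeltaInf
end

section
/- N₅ has dimension 3 over the field with 5 elements; every vector of N₅ fixed by all coordinate permutations in S₅ is zero; every S₅-invariant F₅-linear functional on N₅ is zero; and N₅ is irreducible as a module over the alternating group A₅: every F₅-subspace of N₅ invariant under all even coordinate permutations is either 0 or all of N₅. -/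
/-!
Write `d i j = e_i - e_j` for the class in `N₅`. For fixed `i` the `d i k` span `N₅`
(`eq_top_of_forall_diffVec_mem`), since `v = -∑ₖ v_k (e_i - e_k)` whenever `∑ v_k = 0`; and a class
vanishes exactly when its representative is constant (`mk_eq_zero_iff`).

* Dimension: rank-nullity gives `5 - 1 - 1 = 3`.
* Invariant vectors: for a representative `v`, the transposition `(i j)` changes `v` by a constant
  vector which vanishes at any third coordinate, so `v i = v j`.
* Invariant functionals: `(i j)` maps `d i j` to `-d i j`, so `2 φ (d i j) = 0`.
* Irreducibility: if `v i ≠ v j` and `g` is a 3-cycle on `i, j, k`, then `v - g v` is a nonzero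
  sum-zero vector supported on `{i, j, k}`. As `X² + X + 1` is irreducible over `𝔽₅`, such a vector
  and its image under `g` span all sum-zero vectors on `{i, j, k}`, among them `e_i - e_k`
  (`diffVec_mem_of_ne`). Letting `k` vary gives a spanning set.
-/

/-- The coordinate-sum functional on `(𝔽₅)⁵`. -/
def sumLin : (Fin 5 → ZMod 5) →ₗ[ZMod 5] ZMod 5 where
  toFun v := ∑ i, v i
  map_add' x y := by simp [Finset.sum_add_distrib]
  map_smul' c x := by simp [Finset.mul_sum]

/-- The subspace `{v : (Fin 5 → 𝔽₅) | v₀ + v₁ + v₂ + v₃ + v₄ = 0}`. -/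
def S0 : Submodule (ZMod 5) (Fin 5 → ZMod 5) := LinearMap.ker sumLin

/-- The constant vector `(1,1,1,1,1)`, as an element of `S0`. -/
def cvec : S0 := ⟨fun _ => 1, by simp [S0, LinearMap.mem_ker, sumLin]; decide⟩

/-- The line spanned by the constant vector. -/
def Lline : Submodule (ZMod 5) S0 := Submodule.span (ZMod 5) {cvec}

/-- `N₅`: the quotient of `{Σᵢ vᵢ = 0} ⊂ (𝔽₅)⁵` by the line spanned by `(1,1,1,1,1)`. -/
abbrev N5 := S0 ⧸ Lline

/-- The action of a permutation of the five coordinates on `S0`. -/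
def permS (g : Equiv.Perm (Fin 5)) : S0 →ₗ[ZMod 5] S0 :=
  LinearMap.restrict (LinearMap.funLeft (ZMod 5) (ZMod 5) ⇑g⁻¹)
    (fun v hv => by
      simp only [S0, LinearMap.mem_ker, sumLin, LinearMap.coe_mk, AddHom.coe_mk,
        LinearMap.funLeft_apply] at hv ⊢
      rw [Equiv.sum_comp g⁻¹ v]
      exact hv)

/-- The induced action of a permutation of the five coordinates on `N₅`. -/
def permN (g : Equiv.Perm (Fin 5)) : N5 →ₗ[ZMod 5] N5 :=
  Submodule.mapQ Lline Lline (permS g) (by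
    rw [Lline, Submodule.span_le, Set.singleton_subset_iff]
    have h : permS g cvec = cvec := by
      apply Subtype.ext
      rfl
    simp only [SetLike.mem_coe, Submodule.mem_comap, h]
    exact Submodule.subset_span rfl)

theorem permS_apply (g : Equiv.Perm (Fin 5)) (v : S0) (m : Fin 5) :
    (permS g v).1 m = v.1 (g⁻¹ m) := rfl

theorem permN_mk (g : Equiv.Perm (Fin 5)) (v : S0) :
    permN g (Lline.mkQ v) = Lline.mkQ (permS g v) := rfl

theorem sum_eq_zero_of_S0 (v : S0) : ∑ i, v.1 i = 0 := v.2

theorem mem_Lline_iff (v : S0) : v ∈ Lline ↔ ∃ c : ZMod 5, ∀ m, v.1 m = c := by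
  rw [Lline, Submodule.mem_span_singleton]
  constructor
  · rintro ⟨c, rfl⟩
    exact ⟨c, fun m => by simp [cvec]⟩
  · rintro ⟨c, hc⟩
    refine ⟨c, Subtype.ext (funext fun m => ?_)⟩
    simp [cvec, hc]

theorem mk_eq_zero_iff (v : S0) : Lline.mkQ v = 0 ↔ ∃ c : ZMod 5, ∀ m, v.1 m = c := by
  rw [← mem_Lline_iff, Submodule.mkQ_apply, Submodule.Quotient.mk_eq_zero]

/-- The vector `e_i - e_j` of `S0`; it is `0` when `i = j`. -/
def diffVec (i j : Fin 5) : S0 :=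
  ⟨Pi.single i 1 - Pi.single j 1, by
    simp [S0, LinearMap.mem_ker, sumLin, Finset.sum_sub_distrib]⟩

theorem diffVec_apply (i j m : Fin 5) :
    (diffVec i j).1 m = (if m = i then 1 else 0) - (if m = j then 1 else 0) := by
  simp [diffVec, Pi.single_apply]

theorem eq_top_of_forall_diffVec_mem (W : Submodule (ZMod 5) N5) (i : Fin 5)
    (h : ∀ k, Lline.mkQ (diffVec i k) ∈ W) : W = ⊤ := by
  rw [eq_top_iff]
  intro w _
  obtain ⟨v, rfl⟩ := Lline.mkQ_surjective w
  have hv : v = ∑ k, (-v.1 k) • diffVec i k := by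
    refine Subtype.ext (funext fun m => ?_)
    have hs := sum_eq_zero_of_S0 v
    simp [Finset.sum_apply, diffVec_apply, mul_sub, Finset.sum_sub_distrib, hs]
  rw [hv, map_sum]
  refine Submodule.sum_mem _ fun k _ => ?_
  rw [map_smul]
  exact W.smul_mem _ (h k)

/-- The linear system expressing `(1, 0, -1)` through `u = (a - c, b - a, c - b)` and its
rotation. Its determinant is a value of the norm form `x² + x y + y²`, which is anisotropic over
`𝔽₅`, so it is solvable as soon as `u ≠ 0`. -/
theorem exists_coeffs : ∀ a b c : ZMod 5, a ≠ b → ∃ x y : ZMod 5,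
    x * (a - c) + y * (c - b) = 1 ∧ x * (b - a) + y * (a - c) = 0 := by
  decide

theorem diffVec_mem_of_ne (W : Submodule (ZMod 5) N5)
    (hW : ∀ g ∈ alternatingGroup (Fin 5), ∀ w ∈ W, permN g w ∈ W) (v : S0)
    (hv : Lline.mkQ v ∈ W) {i j k : Fin 5} (hij : i ≠ j) (hik : i ≠ k) (hjk : j ≠ k)
    (hne : v.1 i ≠ v.1 j) : Lline.mkQ (diffVec i k) ∈ W := by
  obtain ⟨x, y, h1, h2⟩ := exists_coeffs (v.1 i) (v.1 j) (v.1 k) hne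
  set g : Equiv.Perm (Fin 5) := Equiv.swap i j * Equiv.swap j k with hg
  have hgA : g ∈ alternatingGroup (Fin 5) := by
    rw [Equiv.Perm.mem_alternatingGroup, hg, Equiv.Perm.sign_mul, Equiv.Perm.sign_swap hij,
      Equiv.Perm.sign_swap hjk]
    rfl
  have gi : g⁻¹ i = k := by
    simp [hg, mul_inv_rev]
  have gj : g⁻¹ j = i := by
    simp [hg, mul_inv_rev, Equiv.swap_apply_of_ne_of_ne hij hik]
  have gk : g⁻¹ k = j := by
    simp [hg, mul_inv_rev, Equiv.swap_apply_of_ne_of_ne hik.symm hjk.symm]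
  have key : diffVec i k =
      x • (v - permS g v) + y • (permS g v - permS g (permS g v)) := by
    refine Subtype.ext (funext fun m => ?_)
    rw [diffVec_apply]
    simp only [Submodule.coe_add, Submodule.coe_smul, Submodule.coe_sub, Pi.add_apply,
      Pi.smul_apply, Pi.sub_apply, permS_apply, smul_eq_mul]
    by_cases hmi : m = i
    · subst hmi
      simp only [gi, gk, hik, if_true, if_false]
      linear_combination -h1
    by_cases hmj : m = j
    · subst hmj
      simp only [gi, gj, hij.symm, hjk, if_false]
      linear_combination -h2
    by_cases hmk : m = k
    · subst hmk
      simp only [gk, gj, hik.symm, if_true, if_false]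
      linear_combination h1 + h2
    · have gm : g⁻¹ m = m := by
        simp [hg, mul_inv_rev, Equiv.swap_apply_of_ne_of_ne hmi hmj,
          Equiv.swap_apply_of_ne_of_ne hmj hmk]
      simp [gm, hmi, hmk]
  have hv1 : Lline.mkQ (permS g v) ∈ W := hW g hgA _ hv
  have hv2 : Lline.mkQ (permS g (permS g v)) ∈ W := hW g hgA _ hv1
  rw [key, map_add, map_smul, map_smul, map_sub, map_sub]
  exact W.add_mem (W.smul_mem _ (W.sub_mem hv hv1)) (W.smul_mem _ (W.sub_mem hv1 hv2))

theorem exists_third : ∀ i j : Fin 5, ∃ k, i ≠ k ∧ j ≠ k := by decide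

theorem finrank_N5 : Module.finrank (ZMod 5) N5 = 3 := by
  have : Fact (Nat.Prime 5) := ⟨by norm_num⟩
  have hsurj : LinearMap.range sumLin = ⊤ := by
    rw [LinearMap.range_eq_top]
    intro c
    exact ⟨Pi.single 0 c, by simp [sumLin]⟩
  have h1 := LinearMap.finrank_range_add_finrank_ker sumLin
  rw [hsurj, finrank_top, Module.finrank_self, Module.finrank_fin_fun] at h1
  have hc : cvec ≠ 0 := by
    intro h
    have h0 := congrFun (congrArg Subtype.val h) 0
    simp [cvec] at h0
  have h2 : Module.finrank (ZMod 5) Lline = 1 := finrank_span_singleton hc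
  have h3 : Module.finrank (ZMod 5) N5 + Module.finrank (ZMod 5) Lline =
      Module.finrank (ZMod 5) S0 := Submodule.finrank_quotient_add_finrank Lline
  have h4 : 1 + Module.finrank (ZMod 5) S0 = 5 := h1
  omega

theorem eq_zero_of_invariant (w : N5) (hw : ∀ g : Equiv.Perm (Fin 5), permN g w = w) :
    w = 0 := by
  obtain ⟨v, rfl⟩ := Lline.mkQ_surjective w
  rw [mk_eq_zero_iff]
  refine ⟨v.1 0, fun j => ?_⟩
  obtain ⟨k, hk0, hkj⟩ := exists_third 0 j
  have h := hw (Equiv.swap 0 j)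
  rw [permN_mk, ← sub_eq_zero, ← map_sub, mk_eq_zero_iff] at h
  obtain ⟨c, hc⟩ := h
  have h0 := hc 0
  have hk := hc k
  simp only [Submodule.coe_sub, Pi.sub_apply, permS_apply, Equiv.swap_inv,
    Equiv.swap_apply_left, Equiv.swap_apply_of_ne_of_ne hk0.symm hkj.symm, sub_self] at h0 hk
  rw [← hk] at h0
  exact sub_eq_zero.mp h0

theorem functional_eq_zero (φ : N5 →ₗ[ZMod 5] ZMod 5)
    (hφ : ∀ (g : Equiv.Perm (Fin 5)) (w : N5), φ (permN g w) = φ w) : φ = 0 := by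
  rw [← LinearMap.ker_eq_top]
  refine eq_top_of_forall_diffVec_mem _ 0 fun k => ?_
  rw [LinearMap.mem_ker]
  have hs : permS (Equiv.swap 0 k) (diffVec 0 k) = -diffVec 0 k := by
    refine Subtype.ext (funext fun m => ?_)
    rw [permS_apply, Equiv.swap_inv, Submodule.coe_neg, Pi.neg_apply, diffVec_apply,
      diffVec_apply]
    revert k m
    decide
  have h := hφ (Equiv.swap 0 k) (Lline.mkQ (diffVec 0 k))
  rw [permN_mk, hs, map_neg, map_neg] at h
  have h2 : ∀ t : ZMod 5, -t = t → t = 0 := by decide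
  exact h2 _ h

theorem eq_bot_or_top (W : Submodule (ZMod 5) N5)
    (hW : ∀ g ∈ alternatingGroup (Fin 5), ∀ w ∈ W, permN g w ∈ W) : W = ⊥ ∨ W = ⊤ := by
  rw [or_iff_not_imp_left]
  intro hne
  obtain ⟨w, hw, hw0⟩ := W.ne_bot_iff.mp hne
  obtain ⟨v, rfl⟩ := Lline.mkQ_surjective w
  have hv : ∃ j, v.1 0 ≠ v.1 j := by
    by_contra! hcon
    exact hw0 ((mk_eq_zero_iff v).mpr ⟨v.1 0, fun m => (hcon m).symm⟩)
  obtain ⟨j, hj⟩ := hv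
  have h0j : (0 : Fin 5) ≠ j := fun h => hj (by rw [← h])
  have hk : ∀ k, 0 ≠ k → j ≠ k → Lline.mkQ (diffVec 0 k) ∈ W := fun k h0k hjk =>
    diffVec_mem_of_ne W hW v hw h0j h0k hjk hj
  refine eq_top_of_forall_diffVec_mem W 0 fun k => ?_
  by_cases h0k : 0 = k
  · have hz : diffVec 0 k = 0 := by
      subst h0k
      exact Subtype.ext (sub_self _)
    rw [hz, map_zero]
    exact W.zero_mem
  by_cases hjk : j = k
  · subst hjk
    -- `e_0 - e_l` is itself a vector with distinct values at `0` and `l`, and `j` is a third index.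
    obtain ⟨l, h0l, hjl⟩ := exists_third 0 j
    refine diffVec_mem_of_ne W hW (diffVec 0 l) (hk l h0l hjl) h0l h0j hjl.symm ?_
    rw [diffVec_apply, diffVec_apply]
    simp only [h0l, h0l.symm, if_true, if_false]
    decide
  · exact hk k h0k hjk

/-- `N₅` is 3-dimensional over `𝔽₅`; every `S₅`-invariant vector of `N₅` is zero; every
`S₅`-invariant `𝔽₅`-linear functional on `N₅` is zero; and `N₅` is irreducible as a module
over the alternating group `A₅`: every subspace invariant under all even coordinate
permutations is `0` or all of `N₅`. -/
theorem N5_irreducible :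
    Module.finrank (ZMod 5) N5 = 3 ∧
    (∀ w : N5, (∀ g : Equiv.Perm (Fin 5), permN g w = w) → w = 0) ∧
    (∀ φ : N5 →ₗ[ZMod 5] ZMod 5,
      (∀ (g : Equiv.Perm (Fin 5)) (w : N5), φ (permN g w) = φ w) → φ = 0) ∧
    (∀ W : Submodule (ZMod 5) N5,
      (∀ g ∈ alternatingGroup (Fin 5), ∀ w ∈ W, permN g w ∈ W) → W = ⊥ ∨ W = ⊤) := by
  exact ⟨finrank_N5, eq_zero_of_invariant, functional_eq_zero, eq_bot_or_top⟩
end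

section
/- In W = ⋀²M with e := Σ_{i∈ℤ/5} fᵢ ∧ f_{i+1}: the 5-cycle (01234) fixes e, and the even permutation (14)(23) sends e to −e; the orbit of e under the alternating group A₅ has exactly 12 elements and is closed under negation (so it consists of 6 antipodal pairs); this orbit spans E₀ over ℤ; and one may choose one element from each of the 6 antipodal pairs so that the resulting 6 elements form a ℤ-basis of E₀. -/
/-!
The wedges `f_p ∧ f_q` with `p < q < 4` form a basis of `W`: they span because
`f₄ = -(f₀ + f₁ + f₂ + f₃)`, and the `2 × 2` minors of the coordinates `x ↦ x_a - x₄` on `M`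
show that they are independent. `ofCoords : ℤ⁶ → W` is the resulting injective map, and
`wedge_fv` gives the coordinates of every `f_i ∧ f_j`. Hence `g • e` has an explicit coordinate
vector `orbCoords g` (`mapW_eW`), and the claims about the orbit become finite computations over
the 60 even permutations: up to sign the orbit consists of the six rows of the matrix `reps`.

The orbit lies in `E₀` because a pentagon is a sum of three triangles of a fan triangulation:
`e = Δ(0,1,2) + Δ(0,2,3) + Δ(0,3,4)` with `Δ(i,j,k) = f_i∧f_j + f_j∧f_k + f_k∧f_i`. Conversely,
with `repsInv = 5 · reps⁻¹`, which is an integer matrix, the coefficients of every triangle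
in terms of the six representatives turn out to be integers, so the six representatives span `E₀`;
the existence of `repsInv` also makes them independent.
-/

/-- The line in `ℤ⁵` spanned by the constant vector `(1,1,1,1,1)`. -/
def constLine : Submodule ℤ (Fin 5 → ℤ) := Submodule.span ℤ {fun _ => 1}

/-- `M = ℤ⁵ / ℤ·(1,1,1,1,1)`. -/
abbrev Mmod := (Fin 5 → ℤ) ⧸ constLine

/-- `fᵢ`: the images in `M` of the standard basis vectors of `ℤ⁵` (indices in `ℤ/5`,
realized as `Fin 5` with its cyclic addition). -/
def fv (i : Fin 5) : Mmod := Submodule.Quotient.mk (Pi.single i 1)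

/-- The action of a permutation of the five coordinates on `M`. -/
def permM (g : Equiv.Perm (Fin 5)) : Mmod →ₗ[ℤ] Mmod :=
  Submodule.mapQ constLine constLine (LinearMap.funLeft ℤ ℤ ⇑g⁻¹) (by
    rw [constLine, Submodule.span_le, Set.singleton_subset_iff]
    exact Submodule.subset_span rfl)

open ExteriorAlgebra in
/-- `ExteriorAlgebra.map` preserves the second exterior power. -/
lemma map_mem_pow2 (f : Mmod →ₗ[ℤ] Mmod) {x : ExteriorAlgebra ℤ Mmod}
    (hx : x ∈ ⋀[ℤ]^2 Mmod) : ExteriorAlgebra.map f x ∈ ⋀[ℤ]^2 Mmod := by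
  rw [← ExteriorAlgebra.ιMulti_span_fixedDegree] at hx ⊢
  induction hx using Submodule.span_induction with
  | mem x h =>
    obtain ⟨v, rfl⟩ := h
    rw [ExteriorAlgebra.map_apply_ιMulti]
    exact Submodule.subset_span ⟨f ∘ v, rfl⟩
  | zero => simp
  | add x y _ _ hx hy => rw [map_add]; exact add_mem hx hy
  | smul c x _ hx => rw [map_zsmul]; exact Submodule.smul_mem _ _ hx

/-- `W = ⋀² M`, the second exterior power of `M` over `ℤ`. -/
abbrev Wmod := ↥(⋀[ℤ]^2 Mmod)

/-- The wedge product `a ∧ b ∈ ⋀² M` of two elements of `M`. -/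
def wedge (a b : Mmod) : Wmod :=
  ⟨ExteriorAlgebra.ιMulti ℤ 2 ![a, b], ExteriorAlgebra.ιMulti_range ℤ 2 ⟨![a, b], rfl⟩⟩

/-- The induced action of a permutation of the five coordinates on `W = ⋀² M`. -/
def mapW (g : Equiv.Perm (Fin 5)) : Wmod →ₗ[ℤ] Wmod :=
  LinearMap.restrict (ExteriorAlgebra.map (permM g)).toLinearMap
    (fun _ hx => map_mem_pow2 (permM g) hx)

/-- `e = Σ_{i ∈ ℤ/5} fᵢ ∧ f_{i+1} ∈ W`. -/
def eW : Wmod := ∑ i : Fin 5, wedge (fv i) (fv (i + 1))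

/-- `E₀ ⊆ W`: the `ℤ`-span of the elements `fᵢ∧fⱼ + fⱼ∧f_k + f_k∧fᵢ` for pairwise
distinct `i, j, k`. -/
def E0W : Submodule ℤ Wmod :=
  Submodule.span ℤ {x | ∃ i j k : Fin 5, i ≠ j ∧ j ≠ k ∧ i ≠ k ∧
    x = wedge (fv i) (fv j) + wedge (fv j) (fv k) + wedge (fv k) (fv i)}

/-- The orbit of `e` under the alternating group `A₅`. -/
def orbE : Set Wmod := {x | ∃ g ∈ alternatingGroup (Fin 5), mapW g eW = x}

/-! ### The wedge product and the group action -/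

lemma wedge_eq_ιMulti (a b : Mmod) : wedge a b = exteriorPower.ιMulti ℤ 2 ![a, b] := rfl

lemma wedge_self (a : Mmod) : wedge a a = 0 := by
  rw [wedge_eq_ιMulti]
  exact (exteriorPower.ιMulti ℤ 2).map_eq_zero_of_eq _ (i := 0) (j := 1) rfl (by decide)

lemma wedge_add_left (a b c : Mmod) : wedge (a + b) c = wedge a c + wedge b c := by
  simpa [wedge_eq_ιMulti] using (exteriorPower.ιMulti ℤ 2 (M := Mmod)).map_vecCons_add ![c] a b

lemma wedge_smul_left (n : ℤ) (a c : Mmod) : wedge (n • a) c = n • wedge a c := by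
  simpa only [wedge_eq_ιMulti] using
    (exteriorPower.ιMulti ℤ 2 (M := Mmod)).map_vecCons_smul ![c] n a

lemma wedge_swap (a b : Mmod) : wedge a b = -wedge b a := by
  have h := (exteriorPower.ιMulti ℤ 2 (M := Mmod)).map_swap ![b, a] (i := 0) (j := 1) (by decide)
  rw [wedge_eq_ιMulti, wedge_eq_ιMulti, ← h]
  congr 1
  ext i
  fin_cases i <;> rfl

lemma wedge_add_right (a b c : Mmod) : wedge c (a + b) = wedge c a + wedge c b := by
  rw [wedge_swap, wedge_add_left, wedge_swap c a, wedge_swap c b]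
  abel

lemma wedge_smul_right (n : ℤ) (a c : Mmod) : wedge c (n • a) = n • wedge c a := by
  rw [wedge_swap, wedge_smul_left, wedge_swap c a, smul_neg]

lemma permM_fv (g : Equiv.Perm (Fin 5)) (i : Fin 5) : permM g (fv i) = fv (g i) := by
  simp only [permM, fv, Submodule.mapQ_apply]
  congr 1
  ext j
  simp only [LinearMap.funLeft_apply, Pi.single_apply, Equiv.Perm.inv_eq_iff_eq]

lemma mapW_wedge (g : Equiv.Perm (Fin 5)) (a b : Mmod) :
    mapW g (wedge a b) = wedge (permM g a) (permM g b) := by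
  apply Subtype.ext
  refine (ExteriorAlgebra.map_apply_ιMulti (permM g) ![a, b]).trans ?_
  refine congrArg (ExteriorAlgebra.ιMulti ℤ 2) ?_
  ext i
  fin_cases i <;> rfl

/-! ### Coordinates on `W` -/

/-- The coordinates of `f_i` in the basis `f₀, f₁, f₂, f₃` of `M`; the relation
`f₀ + f₁ + f₂ + f₃ + f₄ = 0` gives those of `f₄`. -/
def fvCoords (i : Fin 5) (a : Fin 4) : ℤ :=
  if i = 4 then -1 else if i = a.castSucc then 1 else 0

/-- The smaller indices of the six pairs `p < q` in `{0,1,2,3}`, in lexicographic order. -/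
def pairFst : Fin 6 → Fin 4 := ![0, 0, 0, 1, 1, 2]

/-- The larger indices of the six pairs `p < q` in `{0,1,2,3}`, in lexicographic order. -/
def pairSnd : Fin 6 → Fin 4 := ![1, 2, 3, 2, 3, 3]

/-- The coordinates of `f_i ∧ f_j` in the basis `f_p ∧ f_q` (`p < q < 4`) of `W`. -/
def wedgeCoords (i j : Fin 5) (k : Fin 6) : ℤ :=
  fvCoords i (pairFst k) * fvCoords j (pairSnd k) - fvCoords i (pairSnd k) * fvCoords j (pairFst k)

/-- The linear map `ℤ⁶ → W` given by the six elements `f_p ∧ f_q` with `p < q < 4`. -/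
noncomputable def ofCoords : (Fin 6 → ℤ) →ₗ[ℤ] Wmod :=
  Fintype.linearCombination ℤ
    fun k => wedge (fv (pairFst k).castSucc) (fv (pairSnd k).castSucc)

lemma ofCoords_apply (v : Fin 6 → ℤ) :
    ofCoords v = ∑ k, v k • wedge (fv (pairFst k).castSucc) (fv (pairSnd k).castSucc) := rfl

/-- The functional `x ↦ x_a - x₄` on `M`. -/
def coordM (a : Fin 4) : Module.Dual ℤ Mmod :=
  constLine.liftQ ((LinearMap.proj a.castSucc : (Fin 5 → ℤ) →ₗ[ℤ] ℤ) -
    (LinearMap.proj 4 : (Fin 5 → ℤ) →ₗ[ℤ] ℤ)) (by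
    rw [constLine, Submodule.span_le, Set.singleton_subset_iff]
    simp)

lemma coordM_fv (a : Fin 4) (i : Fin 5) : coordM a (fv i) = fvCoords i a := by
  have h : coordM a (fv i) =
      (Pi.single i 1 : Fin 5 → ℤ) a.castSucc - (Pi.single i 1 : Fin 5 → ℤ) 4 := by
    rw [coordM, fv]
    rfl
  rw [h]
  clear h
  revert a i
  decide

/-- The minors `(x_p - x₄)(y_q - y₄) - (x_q - x₄)(y_p - y₄)` of `x ∧ y` recover the
coordinates. -/
lemma ofCoords_injective : Function.Injective ofCoords := by
  have hdual (k : Fin 6) (i j : Fin 5) :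
      exteriorPower.alternatingMapToDual ℤ Mmod 2 ![coordM (pairFst k), coordM (pairSnd k)]
        (wedge (fv i) (fv j)) = wedgeCoords i j k := by
    rw [wedge_eq_ιMulti, exteriorPower.alternatingMapToDual_apply_ιMulti, Matrix.det_fin_two]
    simp [coordM_fv, wedgeCoords]
  have hbasis : ∀ k l : Fin 6, wedgeCoords (pairFst l).castSucc (pairSnd l).castSucc k =
      if l = k then 1 else 0 := by decide
  intro v w h
  ext k
  have h' := congrArg
    (exteriorPower.alternatingMapToDual ℤ Mmod 2 ![coordM (pairFst k), coordM (pairSnd k)]) h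
  simpa [ofCoords_apply, hdual, hbasis] using h'

lemma fv_eq_sum (i : Fin 5) : fv i = ∑ a : Fin 4, fvCoords i a • fv a.castSucc := by
  have h (a : Fin 5) : fv a = constLine.mkQ (Pi.single a 1) := rfl
  simp only [h, ← map_smul, ← map_sum]
  rw [← sub_eq_zero, ← map_sub, Submodule.mkQ_apply, Submodule.Quotient.mk_eq_zero, constLine,
    Submodule.mem_span_singleton]
  refine ⟨if i = 4 then 1 else 0, ?_⟩
  ext j
  simp only [Fin.sum_univ_four, Pi.smul_apply, Pi.sub_apply, Pi.add_apply]
  revert i j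
  decide

lemma wedge_fv (i j : Fin 5) : wedge (fv i) (fv j) = ofCoords (wedgeCoords i j) := by
  conv_lhs => rw [fv_eq_sum i, fv_eq_sum j]
  simp only [Fin.sum_univ_four, wedge_add_left, wedge_add_right, wedge_smul_left,
    wedge_smul_right, wedge_self, ofCoords_apply, Fin.sum_univ_six, wedgeCoords, pairFst, pairSnd]
  rw [wedge_swap (fv (Fin.castSucc 1)) (fv (Fin.castSucc 0)),
    wedge_swap (fv (Fin.castSucc 2)) (fv (Fin.castSucc 0)),
    wedge_swap (fv (Fin.castSucc 3)) (fv (Fin.castSucc 0)),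
    wedge_swap (fv (Fin.castSucc 2)) (fv (Fin.castSucc 1)),
    wedge_swap (fv (Fin.castSucc 3)) (fv (Fin.castSucc 1)),
    wedge_swap (fv (Fin.castSucc 3)) (fv (Fin.castSucc 2))]
  simp
  module

/-! ### The orbit in coordinates -/

/-- The coordinates of `g • e = ∑ i, f_{g i} ∧ f_{g (i + 1)}`. -/
def orbCoords (g : Equiv.Perm (Fin 5)) : Fin 6 → ℤ :=
  ∑ i : Fin 5, wedgeCoords (g i) (g (i + 1))

/-- The coordinates of the triangle `f_i∧f_j + f_j∧f_k + f_k∧f_i`. -/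
def triCoords (i j k : Fin 5) : Fin 6 → ℤ :=
  wedgeCoords i j + wedgeCoords j k + wedgeCoords k i

/-- The coordinates of representatives of the six antipodal pairs in the orbit. -/
def reps : Fin 6 → Fin 6 → ℤ :=
  ![![2, 1, 2, 1, 1, 2],
    ![1, -2, 1, -1, 2, 2],
    ![2, -1, -1, -2, -1, 2],
    ![1, 1, -2, -2, -2, -1],
    ![2, 2, 1, -1, -2, 1],
    ![1, 2, 2, 2, -1, -1]]

/-- Five times the inverse of the matrix `reps`. -/
def repsInv : Fin 6 → Fin 6 → ℤ :=
  ![![1, 1, 1, 2, -2, 2],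
    ![2, -1, -2, 1, 1, -2],
    ![-2, 2, -1, -1, 2, 1],
    ![1, -2, 2, -1, -2, 1],
    ![2, 1, -2, 2, -1, -1],
    ![1, -2, 1, -2, 1, -2]]

lemma mapW_eW (g : Equiv.Perm (Fin 5)) : mapW g eW = ofCoords (orbCoords g) := by
  simp only [eW, orbCoords, map_sum, mapW_wedge, permM_fv]
  simp only [wedge_fv]

lemma eW_eq : eW = ofCoords (orbCoords 1) := by
  simp only [eW, orbCoords, map_sum, wedge_fv, Equiv.Perm.one_apply]

lemma triangle_eq (i j k : Fin 5) :
    wedge (fv i) (fv j) + wedge (fv j) (fv k) + wedge (fv k) (fv i) =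
      ofCoords (triCoords i j k) := by
  simp only [triCoords, map_add, wedge_fv]

lemma orbCoords_mem_reps : ∀ g : Equiv.Perm (Fin 5), Equiv.Perm.sign g = 1 →
    ∃ m, reps m = orbCoords g ∨ -reps m = orbCoords g := by
  decide +kernel

lemma reps_mem_orbit : ∀ m, ∃ g : Equiv.Perm (Fin 5), Equiv.Perm.sign g = 1 ∧
    orbCoords g = reps m := by
  decide +kernel

lemma neg_reps_mem_orbit : ∀ m, ∃ g : Equiv.Perm (Fin 5), Equiv.Perm.sign g = 1 ∧
    orbCoords g = -reps m := by
  decide +kernel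

lemma reps_ne_neg : ∀ m n, reps m ≠ -reps n := by decide +kernel

lemma reps_injective : Function.Injective reps := by
  unfold Function.Injective
  decide +kernel

lemma reps_mul_repsInv : ∀ m n, ∑ k, reps m k * repsInv k n = if m = n then 5 else 0 := by
  decide +kernel

lemma reps_linearIndependent : LinearIndependent ℤ reps := by
  rw [Fintype.linearIndependent_iff]
  intro c hc n
  have h : ∑ k, (∑ m, c m • reps m) k * repsInv k n = 5 * c n := by
    simp only [Finset.sum_apply, Pi.smul_apply, smul_eq_mul, Finset.sum_mul, mul_assoc]
    rw [Finset.sum_comm]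
    simp only [← Finset.mul_sum, reps_mul_repsInv]
    simp [mul_comm]
  rw [hc] at h
  simp at h
  omega

/-- The division by `5` is exact. -/
lemma triCoords_eq : ∀ i j k : Fin 5, triCoords i j k =
    ∑ m, ((∑ l, triCoords i j k l * repsInv l m) / 5) • reps m := by
  decide +kernel

/-- The fan triangulation of the pentagon from its vertex `g 0`. -/
lemma orbCoords_eq_triangles (g : Equiv.Perm (Fin 5)) : orbCoords g =
    triCoords (g 0) (g 1) (g 2) + triCoords (g 0) (g 2) (g 3) + triCoords (g 0) (g 3) (g 4) := by
  have hswap (i j : Fin 5) : wedgeCoords i j = -wedgeCoords j i := by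
    ext k
    simp only [wedgeCoords, Pi.neg_apply]
    ring
  simp only [orbCoords, triCoords, Fin.sum_univ_five]
  rw [hswap (g 2) (g 0), hswap (g 3) (g 0)]
  simp only [show (0 : Fin 5) + 1 = 1 from rfl, show (1 : Fin 5) + 1 = 2 from rfl,
    show (2 : Fin 5) + 1 = 3 from rfl, show (3 : Fin 5) + 1 = 4 from rfl,
    show (4 : Fin 5) + 1 = 0 from rfl]
  abel

lemma orbE_eq : orbE =
    Set.range (fun m => ofCoords (reps m)) ∪ Set.range (fun m => -ofCoords (reps m)) := by
  ext x
  simp only [orbE, Set.mem_ofPred_eq, Equiv.Perm.mem_alternatingGroup, mapW_eW, Set.mem_union,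
    Set.mem_range]
  constructor
  · rintro ⟨g, hg, rfl⟩
    obtain ⟨m, h | h⟩ := orbCoords_mem_reps g hg
    · exact .inl ⟨m, by rw [h]⟩
    · exact .inr ⟨m, by rw [← h, map_neg]⟩
  · rintro (⟨m, rfl⟩ | ⟨m, rfl⟩)
    · obtain ⟨g, hg, h⟩ := reps_mem_orbit m
      exact ⟨g, hg, by rw [h]⟩
    · obtain ⟨g, hg, h⟩ := neg_reps_mem_orbit m
      exact ⟨g, hg, by rw [h, map_neg]⟩

lemma range_inter_range_neg :
    Set.range (fun m => ofCoords (reps m)) ∩ Set.range (fun m => -ofCoords (reps m)) = ∅ := by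
  rw [Set.eq_empty_iff_forall_notMem]
  rintro _ ⟨⟨m, rfl⟩, ⟨n, hn⟩⟩
  refine reps_ne_neg m n (ofCoords_injective ?_)
  rw [map_neg]
  exact hn.symm

lemma ncard_orbE : Set.ncard orbE = 12 := by
  have hinj : Function.Injective (fun m => ofCoords (reps m)) :=
    ofCoords_injective.comp reps_injective
  rw [orbE_eq, Set.ncard_union_eq (Set.disjoint_iff_inter_eq_empty.mpr range_inter_range_neg)
    (Set.finite_range _) (Set.finite_range _), Set.ncard_range_of_injective hinj,
    Set.ncard_range_of_injective (show Function.Injective (fun m => -ofCoords (reps m)) from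
      neg_injective.comp hinj)]
  simp

lemma span_orbE_le : Submodule.span ℤ orbE ≤ E0W := by
  rw [Submodule.span_le]
  rintro _ ⟨g, -, rfl⟩
  have htri (i j k : Fin 5) (hij : i ≠ j) (hjk : j ≠ k) (hik : i ≠ k) :
      ofCoords (triCoords (g i) (g j) (g k)) ∈ E0W :=
    Submodule.subset_span ⟨g i, g j, g k, g.injective.ne hij, g.injective.ne hjk,
      g.injective.ne hik, (triangle_eq _ _ _).symm⟩
  rw [mapW_eW, orbCoords_eq_triangles, map_add, map_add]
  exact add_mem (add_mem (htri 0 1 2 (by decide) (by decide) (by decide))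
    (htri 0 2 3 (by decide) (by decide) (by decide)))
    (htri 0 3 4 (by decide) (by decide) (by decide))

lemma E0W_le_span_reps : E0W ≤ Submodule.span ℤ (Set.range fun m => ofCoords (reps m)) := by
  rw [E0W, Submodule.span_le]
  rintro _ ⟨i, j, k, -, -, -, rfl⟩
  rw [triangle_eq, triCoords_eq, map_sum]
  refine sum_mem fun m _ => ?_
  rw [map_smul]
  exact Submodule.smul_mem _ _ (Submodule.subset_span ⟨m, rfl⟩)

/-- The 5-cycle `(01234)` fixes `e` and the even permutation `(14)(23)` sends `e` to `−e`;
the `A₅`-orbit of `e` has exactly 12 elements and is closed under negation (6 antipodal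
pairs); this orbit spans `E₀` over `ℤ`; and one may select one element from each antipodal
pair so that the resulting 6 elements form a `ℤ`-basis of `E₀` (they are linearly
independent and span `E₀`). -/
theorem orbit_of_e_in_wedge :
    mapW (finRotate 5) eW = eW ∧
    mapW (Equiv.swap 1 4 * Equiv.swap 2 3) eW = -eW ∧
    Set.ncard orbE = 12 ∧
    (∀ x ∈ orbE, -x ∈ orbE) ∧
    Submodule.span ℤ orbE = E0W ∧
    ∃ t : Fin 6 → Wmod,
      (∀ m, t m ∈ orbE) ∧
      orbE = Set.range t ∪ Set.range (fun m => -t m) ∧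
      Set.range t ∩ Set.range (fun m => -t m) = ∅ ∧
      LinearIndependent ℤ t ∧
      Submodule.span ℤ (Set.range t) = E0W := by
  have hsub : Set.range (fun m => ofCoords (reps m)) ⊆ orbE := by
    rw [orbE_eq]
    exact Set.subset_union_left
  refine ⟨?_, ?_, ncard_orbE, ?_, ?_, fun m => ofCoords (reps m), fun m => hsub ⟨m, rfl⟩,
    orbE_eq, range_inter_range_neg, ?_, ?_⟩
  · rw [mapW_eW, eW_eq]
    congr 1
    decide +kernel
  · rw [mapW_eW, eW_eq, ← map_neg]
    congr 1
    decide +kernel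
  · rw [orbE_eq]
    rintro _ (⟨m, rfl⟩ | ⟨m, rfl⟩)
    · exact .inr ⟨m, rfl⟩
    · exact .inl ⟨m, (neg_neg _).symm⟩
  · exact le_antisymm span_orbE_le (E0W_le_span_reps.trans (Submodule.span_mono hsub))
  · exact reps_linearIndependent.map' ofCoords (LinearMap.ker_eq_bot.mpr ofCoords_injective)
  · exact le_antisymm ((Submodule.span_mono hsub).trans span_orbE_le) E0W_le_span_reps
end

section
/- The set of additive (ℤ-linear) maps h : E₀ → N₅ satisfying h(σ₅x) = π₅·h(x) and h(σ₂x) = π₂·h(x) for all x ∈ E₀ is, under pointwise addition, a group with exactly 5 elements. Equivalently: there is a nonzero such equivariant map ψ (necessarily surjective), and every such equivariant map is an F₅-scalar multiple of ψ. -/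
/-- `π₅`: the action of the 5-cycle `(01234)` on `N₅`. -/
def pi5 : N5 →ₗ[ZMod 5] N5 := permN (finRotate 5)

/-- `π₂`: the action of `(04)(23)` on `N₅`. -/
def pi2 : N5 →ₗ[ZMod 5] N5 := permN (Equiv.swap 0 4 * Equiv.swap 2 3)

/-- The equivariance condition on an additive map `h : E₀ → N₅`:
`h(σ₅ x) = π₅·h(x)` and `h(σ₂ x) = π₂·h(x)` for all `x ∈ E₀`. -/
def EquivCond (h : E0 →+ N5) : Prop :=
  (∀ x y : E0, s5 (x : V) = (y : V) → h y = pi5 (h x)) ∧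
  (∀ x y : E0, s2 (x : V) = (y : V) → h y = pi2 (h x))

/-- The class in `N₅` of a sum-zero vector. -/
def mkN (v : Fin 5 → ZMod 5) (hv : ∑ i, v i = 0) : N5 :=
  Submodule.Quotient.mk (p := Lline) ⟨v, hv⟩

lemma mkN_surj (n : N5) : ∃ v hv, n = mkN v hv := by
  obtain ⟨⟨v, hv⟩, rfl⟩ := Submodule.Quotient.mk_surjective Lline n
  exact ⟨v, hv, rfl⟩

lemma mkN_eq_iff {v w : Fin 5 → ZMod 5} {hv : ∑ i, v i = 0} {hw : ∑ i, w i = 0} :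
    mkN v hv = mkN w hw ↔ ∃ d : ZMod 5, ∀ i, v i - w i = d := by
  unfold mkN
  rw [Submodule.Quotient.eq, Lline, Submodule.mem_span_singleton]
  refine exists_congr fun d => ?_
  rw [Subtype.ext_iff, funext_iff]
  refine forall_congr' fun i => ?_
  change d * 1 = v i - w i ↔ _
  rw [mul_one, eq_comm]

lemma permN_mkN (g : Equiv.Perm (Fin 5)) (v : Fin 5 → ZMod 5) (hv : ∑ i, v i = 0) :
    permN g (mkN v hv) = mkN (fun i => v (g⁻¹ i)) ((Equiv.sum_comp g⁻¹ v).trans hv) := rfl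

lemma smul_mkN (c : ZMod 5) (v : Fin 5 → ZMod 5) (hv : ∑ i, v i = 0) :
    c • mkN v hv = mkN (fun i => c * v i) (by rw [← Finset.mul_sum, hv, mul_zero]) := rfl

lemma add_mkN (v w : Fin 5 → ZMod 5) (hv : ∑ i, v i = 0) (hw : ∑ i, w i = 0) :
    mkN v hv + mkN w hw =
      mkN (fun i => v i + w i) (by rw [Finset.sum_add_distrib, hv, hw, add_zero]) := rfl

lemma neg_mkN (v : Fin 5 → ZMod 5) (hv : ∑ i, v i = 0) :
    -mkN v hv = mkN (fun i => -v i) (by rw [Finset.sum_neg_distrib, hv, neg_zero]) := rfl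

/-- Representatives of the images of the basis vectors under `psi`: `e` goes to the identity
function, `e₀` to its transform under `(04)(23)`, and `eₖ` to the `k`-th shift of the latter. -/
def wrep : J5 → Fin 5 → ZMod 5
  | none => ![0, 1, 2, 3, 4]
  | some k => fun i => (![4, 1, 3, 2, 0] : Fin 5 → ZMod 5) (show Fin 5 from (show ZMod 5 from i) - k)

lemma wrep_sum : ∀ j, ∑ i, wrep j i = 0 := by decide

/-- The image of the basis vector with index `j` under `psi`. -/
def wvec (j : J5) : N5 := mkN (wrep j) (wrep_sum j)

lemma pi5_wvec (j : J5) : pi5 (wvec j) = wvec (rotIdx j) := by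
  rw [pi5, wvec, permN_mkN, wvec, mkN_eq_iff]
  revert j
  decide

/-- The integer version of the sign function `sg2`. -/
def sgZ : J5 → ℤ := fun j => if j = some 2 ∨ j = some 3 then -1 else 1

lemma pi2_wvec (j : J5) : pi2 (wvec j) = sgZ j • wvec (t2 j) := by
  have h1 : ∀ j, sgZ j = 1 ∨ sgZ j = -1 := by decide
  rcases h1 j with h | h
  · rw [h, one_zsmul, pi2, wvec, permN_mkN, wvec, mkN_eq_iff]
    revert j
    decide
  · rw [h, neg_one_zsmul, pi2, wvec, permN_mkN, wvec, neg_mkN, mkN_eq_iff]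
    revert j
    decide

/-- The vectors of `N₅` fixed by `π₅` form the line spanned by the class of the identity function. -/
lemma fixed_pi5 (n : N5) (hn : pi5 n = n) : ∃ c : ZMod 5, n = c • wvec none := by
  obtain ⟨v, hv, rfl⟩ := mkN_surj n
  rw [pi5, permN_mkN, mkN_eq_iff] at hn
  obtain ⟨d, hd⟩ := hn
  refine ⟨-d, ?_⟩
  rw [wvec, smul_mkN, mkN_eq_iff]
  refine ⟨v 0, ?_⟩
  have h1 : v 0 - v 1 = d := hd 1
  have h2 : v 1 - v 2 = d := hd 2
  have h3 : v 2 - v 3 = d := hd 3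
  have h4 : v 3 - v 4 = d := hd 4
  intro i
  fin_cases i
  · change v 0 - -d * 0 = v 0
    ring
  · change v 1 - -d * 1 = v 0
    linear_combination -h1
  · change v 2 - -d * 2 = v 0
    linear_combination -h1 - h2
  · change v 3 - -d * 3 = v 0
    linear_combination -h1 - h2 - h3
  · change v 4 - -d * 4 = v 0
    linear_combination -h1 - h2 - h3 - h4

lemma wvec_none_ne_zero : wvec none ≠ 0 := by
  have h0 : (0 : N5) = mkN (fun _ => 0) (by simp) := rfl
  rw [wvec, h0, Ne, mkN_eq_iff]
  decide

/-- The images of `e, e₀, e₁` span `N₅`. -/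
lemma span_wvec (n : N5) : ∃ a b c : ZMod 5,
    n = a • wvec none + b • wvec (some 0) + c • wvec (some 1) := by
  obtain ⟨v, hv, rfl⟩ := mkN_surj n
  have h5 : (5 : ZMod 5) = 0 := rfl
  rw [Fin.sum_univ_five] at hv
  -- The coefficients solve `v = a (0,1,2,3,4) + b (4,1,3,2,0) + c (0,4,1,3,2) + d (1,1,1,1,1)`,
  -- where `d = v 0 + b`.
  obtain ⟨c, hc⟩ : ∃ c, c = v 1 + 2 * v 2 + 2 * v 0 := ⟨_, rfl⟩
  obtain ⟨b, hb⟩ : ∃ b, b = v 1 - 2 * v 3 + 2 * c + v 0 := ⟨_, rfl⟩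
  obtain ⟨a, ha⟩ : ∃ a, a = v 1 - 2 * b - 4 * c - v 0 := ⟨_, rfl⟩
  refine ⟨a, b, c, ?_⟩
  simp only [wvec, smul_mkN, add_mkN]
  rw [mkN_eq_iff]
  refine ⟨v 0 + b, ?_⟩
  intro i
  fin_cases i
  · change v 0 - (a * 0 + b * 4 + c * 0) = v 0 + b
    linear_combination (-b) * h5
  · change v 1 - (a * 1 + b * 1 + c * 4) = v 0 + b
    linear_combination -ha
  · change v 2 - (a * 2 + b * 3 + c * 1) = v 0 + b
    subst ha hb hc
    linear_combination (3 * v 0 + v 1 + 3 * v 2) * h5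
  · change v 3 - (a * 3 + b * 2 + c * 3) = v 0 + b
    subst ha hb hc
    linear_combination (7 * v 0 + 3 * v 1 + 6 * v 2 - v 3) * h5
  · change v 4 - (a * 4 + b * 0 + c * 2) = v 0 + b
    subst ha hb hc
    linear_combination hv + (13 * v 0 + 6 * v 1 + 11 * v 2 - 3 * v 3) * h5

/-- The basis vector with index `j`, as an element of `E₀`. -/
def bE (j : J5) : E0 := ⟨bvec j, Submodule.subset_span ⟨j, rfl⟩⟩

lemma bvec_li : LinearIndependent ℤ bvec := by
  have h : LinearIndependent ℚ bvec := by
    have := (Pi.basisFun ℚ J5).linearIndependent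
    convert this using 1
    funext j
    simp [bvec]
  exact h.restrict_scalars' ℤ

/-- The `ℤ`-basis `e, e₀, …, e₄` of `E₀`. -/
noncomputable def basisE : Module.Basis J5 ℤ E0 := Module.Basis.span bvec_li

lemma basisE_apply (j : J5) : basisE j = bE j :=
  Module.Basis.span_apply bvec_li j

lemma hom_ext {f g : E0 →+ N5} (h : ∀ j, f (bE j) = g (bE j)) : f = g := by
  have : f.toIntLinearMap = g.toIntLinearMap :=
    basisE.ext fun j => by rw [basisE_apply]; exact h j
  exact AddMonoidHom.ext fun x => LinearMap.congr_fun this x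

lemma s5_bvec (j : J5) : s5 (bvec j) = bvec (rotIdx j) := by
  funext i
  change (Pi.single j 1 : V) (rotIdx.symm i) = (Pi.single (rotIdx j) 1 : V) i
  simp only [Pi.single_apply, Equiv.symm_apply_eq]

lemma s2_bvec (j : J5) : s2 (bvec j) = sgZ j • bvec (t2 j) := by
  funext i
  change sg2 i * (Pi.single j 1 : V) (t2 i) = sgZ j • (Pi.single (t2 j) 1 : V) i
  have hs : ∀ j, sg2 j = (sgZ j : ℚ) := fun j => by simp only [sg2, sgZ]; split_ifs <;> simp
  have hz : ∀ j, sgZ (t2 j) = sgZ j := by decide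
  by_cases h : i = t2 j
  · subst h
    simp [t2_invol, hs, hz]
  · have h' : t2 i ≠ j := fun h' => h (by rw [← h', t2_invol])
    simp [h, h']

/-- A `ℚ`-linear automorphism of `V` that maps each basis vector into `E₀` is intertwined with an
endomorphism of `N₅` by `h` as soon as this holds on basis vectors. -/
lemma equiv_of_basis (s : V ≃ₗ[ℚ] V) (p : N5 →ₗ[ZMod 5] N5) (h : E0 →+ N5) (s' : J5 → E0)
    (hs : ∀ j, s (bvec j) = s' j) (hb : ∀ j, h (s' j) = p (h (bE j)))
    (x y : E0) (hxy : s (x : V) = (y : V)) : h y = p (h x) := by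
  have hmem : ∀ x ∈ E0, (s.toLinearMap.restrictScalars ℤ) x ∈ E0 := by
    intro x hx
    have : E0 ≤ E0.comap (s.toLinearMap.restrictScalars ℤ) := by
      conv_lhs => rw [E0]
      rw [Submodule.span_le]
      rintro _ ⟨j, rfl⟩
      change s (bvec j) ∈ E0
      rw [hs]
      exact (s' j).2
    exact this hx
  let S : E0 →ₗ[ℤ] E0 := (s.toLinearMap.restrictScalars ℤ).restrict hmem
  have hy : y = S x := Subtype.ext hxy.symm
  have key : h.comp S.toAddMonoidHom = p.toAddMonoidHom.comp h := by
    refine hom_ext fun j => ?_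
    have : S (bE j) = s' j := Subtype.ext (hs j)
    change h (S (bE j)) = p (h (bE j))
    rw [this, hb]
  rw [hy]
  exact DFunLike.congr_fun key x

/-- The conditions for equivariance of `h` in terms of the images of the basis vectors. -/
lemma equivCond_iff (h : E0 →+ N5) : EquivCond h ↔
    (∀ j, h (bE (rotIdx j)) = pi5 (h (bE j))) ∧
    (∀ j, sgZ j • h (bE (t2 j)) = pi2 (h (bE j))) := by
  constructor
  · rintro ⟨h5, h2⟩
    refine ⟨fun j => h5 _ _ (s5_bvec j), fun j => ?_⟩
    rw [← map_zsmul]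
    exact h2 _ _ (s2_bvec j)
  · rintro ⟨h5, h2⟩
    refine ⟨equiv_of_basis s5 pi5 h (fun j => bE (rotIdx j)) s5_bvec h5,
      equiv_of_basis s2 pi2 h (fun j => sgZ j • bE (t2 j)) s2_bvec fun j => ?_⟩
    rw [map_zsmul]
    exact h2 j

/-- The equivariant map `E₀ → N₅` sending `e` to the class of the identity function. -/
noncomputable def psi : E0 →+ N5 := (basisE.constr ℤ wvec).toAddMonoidHom

lemma psi_bE (j : J5) : psi (bE j) = wvec j := by
  rw [← basisE_apply]
  exact basisE.constr_basis ℤ wvec j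

lemma equivCond_smul_psi (c : ZMod 5) : EquivCond (c • psi) := by
  rw [equivCond_iff]
  refine ⟨fun j => ?_, fun j => ?_⟩
  · simp only [AddMonoidHom.smul_apply, psi_bE, map_smul, pi5_wvec]
  · simp only [AddMonoidHom.smul_apply, psi_bE, map_smul, pi2_wvec]
    exact smul_comm _ _ _

lemma psi_surjective : Function.Surjective psi := by
  intro n
  obtain ⟨a, b, c, rfl⟩ := span_wvec n
  refine ⟨a.val • bE none + b.val • bE (some 0) + c.val • bE (some 1), ?_⟩
  have hval : ∀ (a : ZMod 5) (n : N5), a.val • n = a • n := fun a n => by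
    rw [← Nat.cast_smul_eq_nsmul (ZMod 5), ZMod.natCast_zmod_val]
  simp only [map_add, map_nsmul, psi_bE, hval]

lemma eq_smul_psi (h : E0 →+ N5) (hh : EquivCond h) : ∃ c : ZMod 5, h = c • psi := by
  obtain ⟨h5, h2⟩ := (equivCond_iff h).1 hh
  obtain ⟨g5, g2⟩ := (equivCond_iff psi).1 (by simpa using equivCond_smul_psi 1)
  obtain ⟨c, hc⟩ := fixed_pi5 (h (bE none)) (h5 none).symm
  refine ⟨c, hom_ext ?_⟩
  simp only [AddMonoidHom.smul_apply]
  have e : h (bE none) = c • psi (bE none) := by rw [hc, psi_bE]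
  have hstep : ∀ j, h (bE j) = c • psi (bE j) →
      h (bE (rotIdx j)) = c • psi (bE (rotIdx j)) := fun j hj => by
    rw [h5, g5, hj, map_smul]
  have e0 : h (bE (some 0)) = c • psi (bE (some 0)) := by
    have a1 : h (bE (some 0)) = pi2 (h (bE none)) := (one_zsmul _).symm.trans (h2 none)
    have a2 : psi (bE (some 0)) = pi2 (psi (bE none)) := (one_zsmul _).symm.trans (g2 none)
    rw [a1, a2, e, map_smul]
  have e1 := hstep _ e0
  have e2 := hstep _ e1
  have e3 := hstep _ e2
  have e4 := hstep _ e3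
  rintro (_ | i)
  · exact e
  · fin_cases i
    exacts [e0, e1, e2, e3, e4]

/-- The group (under pointwise addition) of additive maps `h : E₀ → N₅` that are
equivariant for the icosahedral `A₅`-actions (`h(σ₅x) = π₅·h(x)`, `h(σ₂x) = π₂·h(x)`)
has exactly 5 elements; equivalently, there is a surjective nonzero equivariant map `ψ`
and every equivariant map is an `𝔽₅`-scalar multiple of `ψ`. -/
theorem equivariant_maps_E0_to_N5 :
    Nat.card {h : E0 →+ N5 // EquivCond h} = 5 ∧
    ∃ ψ : E0 →+ N5, EquivCond ψ ∧ ψ ≠ 0 ∧ Function.Surjective ψ ∧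
      ∀ h : E0 →+ N5, EquivCond h → ∃ c : ZMod 5, ∀ x : E0, h x = c • ψ x := by
  refine ⟨?_, psi, by simpa using equivCond_smul_psi 1, fun h0 => ?_, psi_surjective,
    fun h hh => ?_⟩
  · let F : ZMod 5 → {h : E0 →+ N5 // EquivCond h} := fun c => ⟨c • psi, equivCond_smul_psi c⟩
    have hF : Function.Bijective F := by
      constructor
      · intro c d hcd
        have hcd' := DFunLike.congr_fun (Subtype.ext_iff.1 hcd) (bE none)
        change c • psi (bE none) = d • psi (bE none) at hcd'
        rw [psi_bE] at hcd'
        have : Fact (Nat.Prime 5) := ⟨by norm_num⟩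
        exact smul_left_injective (ZMod 5) wvec_none_ne_zero hcd'
      · rintro ⟨h, hh⟩
        obtain ⟨c, rfl⟩ := eq_smul_psi h hh
        exact ⟨c, rfl⟩
    rw [← Nat.card_congr (Equiv.ofBijective F hF), Nat.card_zmod]
  · exact wvec_none_ne_zero (by rw [← psi_bE, h0]; rfl)
  · obtain ⟨c, rfl⟩ := eq_smul_psi h hh
    exact ⟨c, fun _ => rfl⟩
end
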